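/- If X is a simple n-od (for some positive integer n ≥ 3) and p ∈ X, then (X,p) has unique hyperspace C(p,X) in the class 𝒯 of trees; that is, for every tree Y and q ∈ Y such that C(p,X) is homeomorphic to C(q,Y), there is a homeomorphism 𝔥 : X → Y with 𝔥(p) = q. -/

import Mathlib

open Set Topology TopologicalSpace

universe u

/-- `IndDimLE m α t` means that the small inductive dimension of `α` is at most `m - 1`.
In particular `IndDimLE 0 α t` means `α` is empty (dimension `-1`). -/
def IndDimLE : ℕ → (α : Type u) → TopologicalSpace α → Prop
  | 0, α, _ => IsEmpty α
  | n + 1, α, t =>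
      ∀ (x : α) (U : Set α), @IsOpen α t U → x ∈ U →
        ∃ V : Set α, @IsOpen α t V ∧ x ∈ V ∧ V ⊆ U ∧
          IndDimLE n (↥(@frontier α t V))
            (TopologicalSpace.induced (Subtype.val : ↥(@frontier α t V) → α) t)

/-- The small inductive dimension of a topological space, as an integer
(with junk value if the dimension is infinite). -/
noncomputable def indDim (α : Type u) [t : TopologicalSpace α] : ℤ :=
  sInf {d : ℤ | ∃ m : ℕ, d = (m : ℤ) - 1 ∧ IndDimLE m α t}

section Defs

variable {X : Type u} [TopologicalSpace X]

/-- `A` is an arc, i.e. homeomorphic to `[0,1]`. -/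
def IsArcSet (A : Set X) : Prop :=
  Nonempty (↥A ≃ₜ ↥(Icc (0 : ℝ) 1))

/-- `A` is an arc with end points `a` and `b`. -/
def IsArcFromTo (A : Set X) (a b : X) : Prop :=
  ∃ h : ↥(Icc (0 : ℝ) 1) ≃ₜ ↥A,
    ((h ⟨0, by norm_num⟩ : ↥A) : X) = a ∧ ((h ⟨1, by norm_num⟩ : ↥A) : X) = b

/-- `a` is an end point of the arc `A`. -/
def IsArcEndpoint (A : Set X) (a : X) : Prop := ∃ b, IsArcFromTo A a b

/-- The points of the arc `A` which are not end points of `A`. -/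
def arcInterior (A : Set X) : Set X := {x ∈ A | ¬ IsArcEndpoint A x}

/-- `N` is a simple `n`-od with vertex `v`: the union of `n` arcs emanating from `v`
and otherwise disjoint from each other. -/
def IsSimpleNod (n : ℕ) (N : Set X) (v : X) : Prop :=
  0 < n ∧ ∃ A : Fin n → Set X, (∀ i, IsArcSet (A i)) ∧ (⋃ i, A i) = N ∧
    (∀ i, IsArcEndpoint (A i) v) ∧ ∀ i j, i ≠ j → A i ∩ A j = {v}

/-- `x` has order `n` in the subspace `S`: `x` has a closed neighborhood in `S`
which is a simple `n`-od having `x` as the vertex. -/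
def HasOrdIn (S : Set X) (x : X) (n : ℕ) : Prop :=
  ∃ N : Set X, N ⊆ S ∧ IsClosed N ∧ (∃ U : Set X, IsOpen U ∧ x ∈ U ∧ U ∩ S ⊆ N) ∧
    IsSimpleNod n N x

/-- The order of `x` in the subspace `S`. -/
noncomputable def ordIn (S : Set X) (x : X) : ℕ := sInf {n | HasOrdIn S x n}

/-- End points (order `1`) of the subspace `S`. -/
def endPtsIn (S : Set X) : Set X := {x ∈ S | HasOrdIn S x 1}

/-- Ordinary points (order `2`) of the subspace `S`. -/
def ordinaryIn (S : Set X) : Set X := {x ∈ S | HasOrdIn S x 2}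

/-- Ramification points (order `≥ 3`) of the subspace `S`. -/
def ramifIn (S : Set X) : Set X := {x ∈ S | ∃ n, 3 ≤ n ∧ HasOrdIn S x n}

/-- Vertices (points of order `≠ 2`) of the subspace `S`. -/
def verticesIn (S : Set X) : Set X := {x ∈ S | ¬ HasOrdIn S x 2}

/-- `e` is an edge of the subspace `S`: an arc joining two vertices of `S` and
containing no more than two vertices of `S`. -/
def IsEdgeIn (S : Set X) (e : Set X) : Prop :=
  e ⊆ S ∧ ∃ a b, a ∈ verticesIn S ∧ b ∈ verticesIn S ∧ IsArcFromTo e a b ∧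
    e ∩ verticesIn S ⊆ {a, b}

/-- `S` is a simple closed curve. -/
def IsSimpleClosedCurve (S : Set X) : Prop := Nonempty (↥S ≃ₜ Circle)

end Defs

/-- `X` is an arc (as a space). -/
def IsArcSpace (X : Type u) [TopologicalSpace X] : Prop :=
  Nonempty (X ≃ₜ ↥(Icc (0 : ℝ) 1))

/-- `X` is a finite graph: a continuum which is the union of finitely many arcs, any two
of which are either disjoint or intersect only in one or both of their end points. -/
def IsFiniteGraph (X : Type u) [MetricSpace X] : Prop :=
  CompactSpace X ∧ ConnectedSpace X ∧ Nonempty X ∧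
    ∃ 𝒜 : Finset (Set X), (∀ A ∈ 𝒜, IsArcSet A) ∧ ⋃₀ (𝒜 : Set (Set X)) = univ ∧
      ∀ A ∈ 𝒜, ∀ B ∈ 𝒜, A ≠ B → ∀ x ∈ A ∩ B, IsArcEndpoint A x ∧ IsArcEndpoint B x

/-- `X` is a tree: a finite graph without simple closed curves. -/
def IsTree (X : Type u) [MetricSpace X] : Prop :=
  IsFiniteGraph X ∧ ∀ S : Set X, ¬ IsSimpleClosedCurve S

/-- `X` is neither an arc nor a simple `n`-od. -/
def NotArcNotNod (X : Type u) [MetricSpace X] : Prop :=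
  ¬ IsArcSpace X ∧ ∀ (n : ℕ) (v : X), ¬ IsSimpleNod n (univ : Set X) v

/-- `T(X)`: the union of all edges of `X` disjoint from the set of end points of `X`. -/
def Tpart (X : Type u) [MetricSpace X] : Set X :=
  ⋃₀ {e : Set X | IsEdgeIn (univ : Set X) e ∧ e ∩ endPtsIn (univ : Set X) = ∅}

/-- `Sub_p(T(X))`: subtrees of `T(X)` containing `p` (subcontinua of `T(X)` all of whose
edges are edges of `X`). -/
def SubTreesP (X : Type u) [MetricSpace X] (p : X) : Set (Set X) :=
  {Y | Y ⊆ Tpart X ∧ p ∈ Y ∧ IsCompact Y ∧ IsConnected Y ∧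
    ∀ e : Set X, IsEdgeIn Y e → IsEdgeIn (univ : Set X) e}

/-- Subtrees of the tree `X`. -/
def Subtrees (X : Type u) [MetricSpace X] : Set (Set X) :=
  {Y | IsCompact Y ∧ IsConnected Y ∧
    ∀ e : Set X, IsEdgeIn Y e → IsEdgeIn (univ : Set X) e}

/-- The smallest subtree of `X` containing `a` and `b`. -/
def treeHull (X : Type u) [MetricSpace X] (a b : X) : Set X :=
  ⋂₀ {Y | Y ∈ Subtrees X ∧ a ∈ Y ∧ b ∈ Y}

/-- The hyperspace `C(p,X)` of subcontinua of `X` containing `p`,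
with the Hausdorff metric. -/
def CP (X : Type u) [MetricSpace X] (p : X) : Type u :=
  {A : NonemptyCompacts X // IsConnected (A : Set X) ∧ p ∈ (A : Set X)}

noncomputable instance (X : Type u) [MetricSpace X] (p : X) : MetricSpace (CP X p) :=
  inferInstanceAs (MetricSpace
    {A : NonemptyCompacts X // IsConnected (A : Set X) ∧ p ∈ (A : Set X)})

/-- The underlying subset of `X` of an element of `C(p,X)`. -/
def CP.set {X : Type u} [MetricSpace X] {p : X} (A : CP X p) : Set X := (A.1 : Set X)

/-- `U_n(X)`: elements of `C(p,X)` having a neighborhood in `C(p,X)` homeomorphic to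
the `n`-cell `[0,1]^n`. -/
def Un (X : Type u) [MetricSpace X] (p : X) (n : ℕ) : Set (CP X p) :=
  {A | ∃ N : Set (CP X p), N ∈ 𝓝 A ∧ Nonempty (↥N ≃ₜ (Fin n → ↥(Icc (0 : ℝ) 1)))}

/-- `𝒰(X) = ⋃ₙ U_n(X)`. -/
def UnionUn (X : Type u) [MetricSpace X] (p : X) : Set (CP X p) := ⋃ n : ℕ, Un X p n

/-- The edges of `X` which are not edges of `Y` and intersect `Y`. -/
def incidentE (X : Type u) [MetricSpace X] (Y : Set X) : Set (Set X) :=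
  {e | IsEdgeIn (univ : Set X) e ∧ ¬ IsEdgeIn Y e ∧ (e ∩ Y).Nonempty}

/-- `U_Y`: elements of `C(p,X)` of the form `Y` together with exactly one interior point
of each edge of `X` incident on `Y`. -/
def UofY (X : Type u) [MetricSpace X] (p : X) (Y : Set X) : Set (CP X p) :=
  {B | ∃ f : ↥(incidentE X Y) → X,
    (∀ e : ↥(incidentE X Y), f e ∈ arcInterior (e : Set X)) ∧ B.set = Y ∪ range f}

/-- `(X,p)` has unique hyperspace `C(p,X)` in the class of trees. -/
def UniqueHyperspaceInTrees (X : Type u) [MetricSpace X] (p : X) : Prop :=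
  ∀ (Y : Type u) [MetricSpace Y], IsTree Y → ∀ q : Y,
    Nonempty (CP X p ≃ₜ CP Y q) → ∃ 𝔥 : X ≃ₜ Y, 𝔥 p = q

theorem bijective_id_add_of_lipschitzWith {E : Type*} [NormedAddCommGroup E] [CompleteSpace E]
    {F : E → E} {c : NNReal} (hc : c < 1) (hF : LipschitzWith c F) :
    Function.Bijective fun x => x + F x := by
  constructor
  · intro x y hxy
    have h1 : x - y = F y - F x := by
      have : x + F x = y + F y := hxy
      rw [sub_eq_sub_iff_add_eq_add, this, add_comm]
    have h2 := hF.dist_le_mul y x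
    rw [dist_eq_norm (F y), ← h1, dist_comm, dist_eq_norm] at h2
    have h3 : (c : ℝ) < 1 := by exact_mod_cast hc
    have h4 : ‖x - y‖ = 0 := by nlinarith [norm_nonneg (x - y)]
    exact sub_eq_zero.1 (norm_eq_zero.1 h4)
  · intro y
    have hK : ContractingWith c fun x => y - F x := by
      refine ⟨hc, LipschitzWith.of_dist_le_mul fun a b => ?_⟩
      rw [dist_sub_left]
      exact hF.dist_le_mul a b
    have : Nonempty E := ⟨0⟩
    refine ⟨hK.fixedPoint, ?_⟩
    have := hK.fixedPoint_isFixedPt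
    have h5 : y - F hK.fixedPoint = hK.fixedPoint := this
    change hK.fixedPoint + F hK.fixedPoint = y
    nth_rewrite 1 [← h5]
    abel

theorem bijective_id_add_smul_of_lipschitzWith {E : Type*} [NormedAddCommGroup E]
    [NormedSpace ℝ E] [CompleteSpace E] {H : E → E} {C : NNReal} (hH : LipschitzWith C H) {s : ℝ}
    (hs : 0 < s) (hsC : s * C < 1) : Function.Bijective fun x => x + s • H x := by
  have hl : LipschitzWith (s.toNNReal * C) fun x => s • H x := by
    refine LipschitzWith.of_dist_le_mul fun a b => ?_
    rw [dist_smul₀, NNReal.coe_mul, Real.coe_toNNReal _ hs.le, Real.norm_of_nonneg hs.le, mul_assoc]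
    exact mul_le_mul_of_nonneg_left (hH.dist_le_mul a b) hs.le
  have hlt : s.toNNReal * C < 1 := by
    rw [← NNReal.coe_lt_coe, NNReal.coe_mul, Real.coe_toNNReal _ hs.le]
    exact_mod_cast hsC
  exact bijective_id_add_of_lipschitzWith hlt hl

theorem det_one_add_pos {E : Type*} [NormedAddCommGroup E] [NormedSpace ℝ E]
    [FiniteDimensional ℝ E] (A : E →L[ℝ] E) (hA : ‖A‖ < 1) : 0 < (1 + A).det := by
  have : CompleteSpace E := FiniteDimensional.complete ℝ E
  have hne : ∀ t ∈ Icc (0 : ℝ) 1, (1 + t • A).det ≠ 0 := by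
    intro t ht
    have hn : ‖-(t • A)‖ < 1 := by
      rw [norm_neg, norm_smul, Real.norm_of_nonneg ht.1]
      nlinarith [norm_nonneg A, ht.2, ht.1]
    have hu : IsUnit (1 - -(t • A)) := (Units.oneSub _ hn).isUnit
    rw [sub_neg_eq_add] at hu
    have h2 := hu.map (ContinuousLinearMap.toLinearMapRingHom (R₁ := ℝ) (M₁ := E))
    have h3 := (LinearMap.isUnit_iff_isUnit_det _).1 h2
    exact h3.ne_zero
  have hcont : Continuous fun t : ℝ => (1 + t • A).det :=
    ContinuousLinearMap.continuous_det.comp (by fun_prop)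
  by_contra hneg
  push Not at hneg
  have h0 : (0 : ℝ) ∈ Icc ((1 + (1 : ℝ) • A).det) ((1 + (0 : ℝ) • A).det) := by
    constructor
    · simpa using hneg
    · simp [ContinuousLinearMap.det]
  obtain ⟨t, ht, h⟩ := intermediate_value_Icc' zero_le_one hcont.continuousOn h0
  exact hne t ht h

theorem exists_det_eq_sum_det_one_add_smul (k : ℕ) (C : ℝ) (hC : 0 < C) :
    ∃ s l : ℕ → ℝ, (∀ i, 0 < s i ∧ s i < C) ∧ ∀ A : (Fin k → ℝ) →L[ℝ] (Fin k → ℝ),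
      A.det = ∑ i ∈ Finset.range (k + 1), l i * (1 + s i • A).det := by
  let s : ℕ → ℝ := fun i => C / (i + 2)
  refine ⟨s, fun i => (∏ j ∈ (Finset.range (k + 1)).erase i, (s i - s j))⁻¹,
    fun i => ⟨by positivity, ?_⟩, ?_⟩
  · exact div_lt_self hC (by linarith [(Nat.cast_nonneg i : (0:ℝ) ≤ i)])
  · intro A
    let M := LinearMap.toMatrix' (A : (Fin k → ℝ) →ₗ[ℝ] (Fin k → ℝ))
    let P : Polynomial ℝ := Matrix.det ((Polynomial.X : Polynomial ℝ) • M.map Polynomial.C +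
      (1 : Matrix (Fin k) (Fin k) ℝ).map Polynomial.C)
    have hcoe : P.coeff k = A.det := by
      have := Polynomial.coeff_det_X_add_C_card M 1
      rw [Fintype.card_fin] at this
      rw [this, ContinuousLinearMap.det, LinearMap.det_toMatrix']
    have hdeg : P.degree < (Finset.range (k + 1)).card := by
      have h := Polynomial.natDegree_det_X_add_C_le M 1
      rw [Fintype.card_fin] at h
      refine lt_of_le_of_lt Polynomial.degree_le_natDegree ?_
      rw [Finset.card_range]
      exact_mod_cast Nat.lt_succ_of_le h
    have hinj : Set.InjOn s (Finset.range (k + 1)) := by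
      intro i _ j _ hij
      have h1 : C / ((i : ℝ) + 2) = C / (j + 2) := hij
      rw [div_eq_div_iff (by positivity) (by positivity)] at h1
      have h2 := mul_left_cancel₀ hC.ne' h1
      have : (i : ℝ) = j := by linarith
      exact_mod_cast this
    have hev : ∀ t, P.eval t = (1 + t • A).det := by
      intro t
      have h1 : P.eval t = (t • M + 1).det := by
        rw [← Polynomial.coe_evalRingHom, RingHom.map_det]
        congr 1
        ext i j
        by_cases hij : i = j <;> simp [Matrix.add_apply, Matrix.smul_apply, hij] <;>
          exact mul_comm _ _
      rw [h1, ContinuousLinearMap.det, ← LinearMap.det_toMatrix']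
      congr 1
      rw [add_comm]
      simp [M]
    have := Lagrange.coeff_eq_sum hinj hdeg
    rw [Finset.card_range, Nat.add_sub_cancel, hcoe] at this
    rw [this]
    refine Finset.sum_congr rfl fun i _ => ?_
    rw [hev, div_eq_mul_inv, mul_comm]

open MeasureTheory in
theorem setIntegral_det_fderiv_eq_of_eqOn_compl {k : ℕ} {F G : (Fin k → ℝ) → (Fin k → ℝ)}
    (hF : ContDiff ℝ 1 F) (hG : ContDiff ℝ 1 G) {C : NNReal} (lF : LipschitzWith C F)
    (lG : LipschitzWith C G) {R : ℝ} (hFG : ∀ x ∉ Metric.ball (0 : Fin k → ℝ) R, F x = G x) :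
    ∫ x in Metric.ball 0 R, (fderiv ℝ F x).det = ∫ x in Metric.ball 0 R, (fderiv ℝ G x).det := by
  have key : ∀ (H : (Fin k → ℝ) → (Fin k → ℝ)), ContDiff ℝ 1 H → LipschitzWith C H → ∀ s : ℝ,
      0 < s → s < 1 / (C + 1) → ∫ x in Metric.ball 0 R, (1 + s • fderiv ℝ H x).det =
        (volume ((fun x => x + s • H x) '' Metric.ball 0 R)).toReal := by
    intro H hH lH s hs hsC
    have hC1 : (0 : ℝ) < C + 1 := by positivity
    have hsC' : s * C < 1 := by
      rw [lt_div_iff₀ hC1] at hsC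
      nlinarith
    have hb := bijective_id_add_smul_of_lipschitzWith lH hs hsC'
    have hd : ∀ x, HasFDerivAt (fun x => x + s • H x) (1 + s • fderiv ℝ H x) x := fun x =>
      (hasFDerivAt_id x).add (((hH.differentiable one_ne_zero) x).hasFDerivAt.const_smul s)
    have hpos : ∀ x, 0 < (1 + s • fderiv ℝ H x).det := by
      intro x
      apply det_one_add_pos
      rw [norm_smul, Real.norm_of_nonneg hs.le]
      have := norm_fderiv_le_of_lipschitz ℝ lH (x₀ := x)
      nlinarith
    have h1 := integral_image_eq_integral_abs_det_fderiv_smul volume (measurableSet_ball)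
      (fun x (_ : x ∈ Metric.ball (0 : Fin k → ℝ) R) => (hd x).hasFDerivWithinAt) hb.1.injOn
      (fun _ => (1 : ℝ))
    simp only [smul_eq_mul, mul_one, abs_of_pos (hpos _)] at h1
    rw [← h1]
    simp [Measure.real]
  have himg : ∀ s : ℝ, 0 < s → s < 1 / (C + 1) →
      (fun x => x + s • F x) '' Metric.ball 0 R = (fun x => x + s • G x) '' Metric.ball 0 R := by
    intro s hs hsC
    have hC1 : (0 : ℝ) < C + 1 := by positivity
    have hsC' : s * C < 1 := by
      rw [lt_div_iff₀ hC1] at hsC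
      nlinarith
    have h1 := image_compl_eq (bijective_id_add_smul_of_lipschitzWith lF hs hsC')
      (s := Metric.ball 0 R)
    have h2 := image_compl_eq (bijective_id_add_smul_of_lipschitzWith lG hs hsC')
      (s := Metric.ball 0 R)
    rw [← compl_inj_iff, ← h1, ← h2]
    exact image_congr fun x hx => by simp only [hFG x hx]
  obtain ⟨s, l, hs, hdet⟩ := exists_det_eq_sum_det_one_add_smul k (1 / (C + 1)) (by positivity)
  simp only [fun x => hdet (fderiv ℝ F x), fun x => hdet (fderiv ℝ G x)]
  have hintg : ∀ H : (Fin k → ℝ) → (Fin k → ℝ), ContDiff ℝ 1 H → ∀ i,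
      IntegrableOn (fun x => l i * (1 + s i • fderiv ℝ H x).det) (Metric.ball 0 R) := by
    intro H hH i
    have hc : Continuous fun x => l i * (1 + s i • fderiv ℝ H x).det := by
      have := hH.continuous_fderiv one_ne_zero
      exact continuous_const.mul (ContinuousLinearMap.continuous_det.comp (by fun_prop))
    exact (hc.continuousOn.integrableOn_compact (isCompact_closedBall 0 R)).mono_set
      Metric.ball_subset_closedBall
  rw [integral_finsetSum _ fun i _ => hintg F hF i, integral_finsetSum _ fun i _ => hintg G hG i]
  refine Finset.sum_congr rfl fun i _ => ?_
  rw [integral_const_mul, integral_const_mul, key F hF lF _ (hs i).1 (hs i).2,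
    key G hG lG _ (hs i).1 (hs i).2, himg _ (hs i).1 (hs i).2]

theorem exists_contDiff_approx_factor {k m : ℕ} {f : (Fin k → ℝ) → (Fin m → ℝ)}
    {K : Set (Fin k → ℝ)} (hK : IsCompact K) (hf : ContinuousOn f K) (hinj : InjOn f K)
    {F : (Fin k → ℝ) → ℝ} (hF : ContinuousOn F K) {ε : ℝ} (hε : 0 < ε) :
    ∃ g : (Fin m → ℝ) → ℝ, ContDiff ℝ 1 g ∧ ∀ x ∈ K, |g (f x) - F x| < ε := by
  have : CompactSpace K := isCompact_iff_compactSpace.1 hK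
  let φ : C(K, Fin m → ℝ) := ⟨K.domRestrict f, hf.domRestrict⟩
  let A : Subalgebra ℝ C(K, ℝ) :=
    { carrier := {h | ∃ g : (Fin m → ℝ) → ℝ, ContDiff ℝ 1 g ∧ ∀ x, h x = g (φ x)}
      mul_mem' := by
        rintro a b ⟨g, hg, ha⟩ ⟨g', hg', hb⟩
        exact ⟨g * g', hg.mul hg', fun x => by simp [ha, hb]⟩
      add_mem' := by
        rintro a b ⟨g, hg, ha⟩ ⟨g', hg', hb⟩
        exact ⟨g + g', hg.add hg', fun x => by simp [ha, hb]⟩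
      algebraMap_mem' := fun r => ⟨fun _ => r, contDiff_const, fun x => rfl⟩ }
  have hA : A.SeparatesPoints := by
    intro x y hxy
    have : f x ≠ f y := fun h => hxy (Subtype.ext (hinj x.2 y.2 h))
    obtain ⟨i, hi⟩ := Function.ne_iff.1 this
    refine ⟨fun x => f x i, ⟨⟨fun x => φ x i, by fun_prop⟩, ⟨fun z => z i, by fun_prop, fun _ => rfl⟩,
      rfl⟩, hi⟩
  obtain ⟨h, hh⟩ := ContinuousMap.exists_mem_subalgebra_near_continuous_of_separatesPoints A hA
    (K.domRestrict F) hF.domRestrict ε hε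
  obtain ⟨g, hg, hgh⟩ := h.2
  refine ⟨g, hg, fun x hx => ?_⟩
  have := hh ⟨x, hx⟩
  rw [hgh] at this
  exact this

theorem exists_contDiff_approx_factor_pi {k m l : ℕ} {f : (Fin k → ℝ) → (Fin m → ℝ)}
    {K : Set (Fin k → ℝ)} (hK : IsCompact K) (hf : ContinuousOn f K) (hinj : InjOn f K)
    {F : (Fin k → ℝ) → (Fin l → ℝ)} (hF : ContinuousOn F K) {ε : ℝ} (hε : 0 < ε) :
    ∃ g : (Fin m → ℝ) → (Fin l → ℝ), ContDiff ℝ 1 g ∧ ∀ x ∈ K, dist (g (f x)) (F x) < ε := by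
  have h : ∀ i, ∃ g : (Fin m → ℝ) → ℝ, ContDiff ℝ 1 g ∧ ∀ x ∈ K, |g (f x) - F x i| < ε := fun i =>
    exists_contDiff_approx_factor hK hf hinj (continuousOn_pi.1 hF i) hε
  choose g hg hgε using h
  exact ⟨fun y i => g i y, contDiff_pi.2 hg, fun x hx => (dist_pi_lt_iff hε).2 fun i =>
    hgε i x hx⟩

/-- A continuous injective map of a cube into a space of smaller dimension can be used to
approximate the identity of the cube by smooth maps of smaller rank. -/
theorem exists_contDiff_comp_near_id {k m : ℕ} {f : (Fin k → ℝ) → (Fin m → ℝ)}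
    (hf : ContinuousOn f (Metric.closedBall 0 1)) (hinj : InjOn f (Metric.closedBall 0 1))
    {ε : ℝ} (hε : 0 < ε) : ∃ (g : (Fin m → ℝ) → (Fin k → ℝ)) (h : (Fin k → ℝ) → (Fin m → ℝ)),
      ContDiff ℝ 1 g ∧ ContDiff ℝ 1 h ∧
        ∀ x ∈ Metric.closedBall (0 : Fin k → ℝ) 1, dist (g (h x)) x < ε := by
  have hK := isCompact_closedBall (0 : Fin k → ℝ) 1
  obtain ⟨g, hg, hgf⟩ := exists_contDiff_approx_factor_pi hK hf hinj continuousOn_id (half_pos hε)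
  have hfK := hK.image_of_continuousOn hf
  have huc := hfK.uniformContinuousAt_of_continuousAt g (fun _ _ => hg.continuous.continuousAt)
    (Metric.dist_mem_uniformity (half_pos hε))
  obtain ⟨δ, hδ, hδg⟩ := Metric.mem_uniformity_dist.1 huc
  obtain ⟨h, hh, hhf⟩ := exists_contDiff_approx_factor_pi hK continuousOn_id (injOn_id _) hf hδ
  refine ⟨g, h, hg, hh, fun x hx => ?_⟩
  have h1 := hhf x hx
  rw [dist_comm] at h1
  have h2 : dist (g (f x)) (g (h x)) < ε / 2 := hδg h1 (mem_image_of_mem _ hx)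
  have h3 := hgf x hx
  rw [dist_comm] at h2
  calc _ ≤ dist (g (h x)) (g (f x)) + dist (g (f x)) x := dist_triangle _ _ _
    _ < ε := by simp only [id] at h3; linarith

theorem det_comp_eq_zero {k m : ℕ} (hmk : m < k) (A : (Fin m → ℝ) →L[ℝ] (Fin k → ℝ))
    (B : (Fin k → ℝ) →L[ℝ] (Fin m → ℝ)) : (A.comp B).det = 0 := by
  rw [ContinuousLinearMap.det]
  by_contra h
  have h2 : Function.Injective (A.comp B) := by
    have := (LinearMap.equivOfDetNeZero _ h).injective
    exact this
  have h3 : Function.Injective (B : (Fin k → ℝ) →ₗ[ℝ] (Fin m → ℝ)) := fun x y hxy => h2 (by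
    have : B x = B y := hxy
    simp [this])
  have := LinearMap.finrank_le_finrank_of_injective h3
  simp at this
  omega

open MeasureTheory in
theorem exists_lipschitz_cutoff (k : ℕ) : ∃ ψ : (Fin k → ℝ) → (Fin k → ℝ), ContDiff ℝ 1 ψ ∧
    LipschitzWith 1 ψ ∧ (∀ y, (fderiv ℝ ψ y).det ≠ 0 → ‖y‖ < 1 / 4) ∧
    0 < ∫ x in Metric.ball 0 1, (fderiv ℝ ψ x).det := by
  let b : ContDiffBump (0 : ℝ) := ⟨1 / 8, 1 / 4, by norm_num, by norm_num⟩
  let a : ℝ → ℝ := fun y => ∫ t in (0 : ℝ)..y, b t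
  have hb : Continuous b := b.continuous
  have ha : ∀ y, HasDerivAt a (b y) y := fun y =>
    intervalIntegral.integral_hasDerivAt_right (hb.intervalIntegrable _ _)
      (hb.stronglyMeasurableAtFilter _ _) hb.continuousAt
  have ha1 : ContDiff ℝ 1 a := by
    rw [contDiff_one_iff_deriv]
    refine ⟨fun y => (ha y).differentiableAt, ?_⟩
    rw [show deriv a = b from funext fun y => (ha y).deriv]
    exact hb
  have haL : LipschitzWith 1 a := by
    refine lipschitzWith_of_nnnorm_deriv_le (fun y => (ha y).differentiableAt) fun y => ?_
    rw [(ha y).deriv, ← NNReal.coe_le_coe, coe_nnnorm, Real.norm_of_nonneg b.nonneg]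
    exact b.le_one
  let ψ : (Fin k → ℝ) → (Fin k → ℝ) := fun y i => a (y i)
  have hdet : ∀ y, (fderiv ℝ ψ y).det = ∏ i, b (y i) := by
    intro y
    have h1 : HasFDerivAt ψ (ContinuousLinearMap.pi fun i =>
        b (y i) • (ContinuousLinearMap.proj (R := ℝ) (φ := fun _ : Fin k => ℝ) i)) y := by
      rw [hasFDerivAt_pi]
      intro i
      exact (ha (y i)).comp_hasFDerivAt y
        (ContinuousLinearMap.proj (R := ℝ) (φ := fun _ : Fin k => ℝ) i).hasFDerivAt
    rw [h1.fderiv, ContinuousLinearMap.det, ← LinearMap.det_toMatrix', ← Matrix.det_diagonal]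
    congr 1
    ext i j
    simp [LinearMap.toMatrix'_apply, Matrix.diagonal_apply, Pi.single_apply]
  have hsupp : ∀ y, (fderiv ℝ ψ y).det ≠ 0 → ‖y‖ < 1 / 4 := by
    intro y hy
    rw [hdet, Finset.prod_ne_zero_iff] at hy
    rw [pi_norm_lt_iff (by norm_num)]
    intro i
    have : y i ∈ Function.support b := hy i (Finset.mem_univ i)
    rw [b.support_eq, mem_ball_zero_iff] at this
    exact this
  refine ⟨ψ, contDiff_pi.2 fun i => ha1.comp (contDiff_apply ℝ ℝ i), ?_, hsupp, ?_⟩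
  · refine LipschitzWith.of_dist_le_mul fun x y => ?_
    rw [dist_pi_le_iff (by positivity)]
    exact fun i => (haL.dist_le_mul _ _).trans (by
      gcongr
      exact dist_le_pi_dist x y i)
  · simp only [hdet] at hsupp ⊢
    have hc : Continuous fun y : Fin k → ℝ => ∏ i, b (y i) := by fun_prop
    have hs : Function.support (fun y : Fin k → ℝ => ∏ i, b (y i)) ⊆ Metric.ball 0 1 := by
      intro y hy
      rw [mem_ball_zero_iff]
      linarith [hsupp y hy]
    rw [setIntegral_eq_integral_of_forall_compl_eq_zero fun y hy => by
      by_contra h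
      exact hy (hs h)]
    refine hc.integral_pos_of_hasCompactSupport_nonneg_nonzero ?_ ?_ (x := 0) ?_
    · exact HasCompactSupport.of_support_subset_isCompact (isCompact_closedBall 0 1)
        (hs.trans Metric.ball_subset_closedBall)
    · exact fun y => Finset.prod_nonneg fun i _ => b.nonneg
    · refine Finset.prod_ne_zero_iff.2 fun i _ => ?_
      exact (b.pos_of_mem_ball (by simp [b])).ne'

/-- Invariance of dimension: a cube does not embed in a space of smaller dimension. -/
theorem le_of_continuousOn_injOn_closedBall {k m : ℕ} {f : (Fin k → ℝ) → (Fin m → ℝ)}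
    (hf : ContinuousOn f (Metric.closedBall 0 1)) (hinj : InjOn f (Metric.closedBall 0 1)) :
    k ≤ m := by
  by_contra! hmk
  obtain ⟨g, h, hg, hh, hgh⟩ := exists_contDiff_comp_near_id hf hinj (ε := 1 / 4) (by norm_num)
  obtain ⟨ψ, hψ, lψ, hsupp, hpos⟩ := exists_lipschitz_cutoff k
  let χ : ContDiffBump (0 : Fin k → ℝ) := ⟨1 / 2, 1, by norm_num, by norm_num⟩
  let Δ : (Fin k → ℝ) → (Fin k → ℝ) := fun x => χ x • (g (h x) - x)
  have hΔ : ContDiff ℝ 1 Δ := χ.contDiff.smul ((hg.comp hh).sub contDiff_id)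
  have hΔ0 : ∀ x ∉ Metric.ball (0 : Fin k → ℝ) 1, Δ x = 0 := by
    intro x hx
    have : χ x = 0 := χ.zero_of_le_dist (by simpa [χ] using hx)
    simp [Δ, this]
  have hΔs : ∀ x, ‖Δ x‖ ≤ 1 / 4 := by
    intro x
    by_cases hx : x ∈ Metric.ball (0 : Fin k → ℝ) 1
    · rw [norm_smul, Real.norm_of_nonneg χ.nonneg]
      have h1 := hgh x (Metric.ball_subset_closedBall hx)
      rw [dist_eq_norm] at h1
      nlinarith [χ.le_one (x := x), χ.nonneg (x := x), norm_nonneg (g (h x) - x)]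
    · rw [hΔ0 x hx]; norm_num
  have hΔc : HasCompactSupport Δ := HasCompactSupport.of_support_subset_isCompact
    (isCompact_closedBall 0 1) fun x hx => by
      by_contra h'
      exact hx (hΔ0 x fun h'' => h' (Metric.ball_subset_closedBall h''))
  obtain ⟨C, hC⟩ : ∃ C, LipschitzWith C Δ :=
    hΔ.lipschitzWith_of_hasCompactSupport hΔc one_ne_zero
  let G : (Fin k → ℝ) → (Fin k → ℝ) := fun x => x + Δ x
  have hG : ContDiff ℝ 1 G := contDiff_id.add hΔ
  have lG : LipschitzWith (1 + C) G := LipschitzWith.id.add hC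
  have lK := lψ.comp lG
  have lψ' : LipschitzWith (1 * (1 + C)) ψ := lψ.weaken (by rw [one_mul]; simp)
  have hintg := setIntegral_det_fderiv_eq_of_eqOn_compl (hψ.comp hG) hψ lK lψ' (R := 1)
    fun x hx => by simp [G, hΔ0 x hx]
  have hzero : ∀ x, (fderiv ℝ (ψ ∘ G) x).det = 0 := by
    intro x
    rw [fderiv_comp x (hψ.differentiable one_ne_zero _) (hG.differentiable one_ne_zero _)]
    have hmul : ((fderiv ℝ ψ (G x)).comp (fderiv ℝ G x)).det =
        (fderiv ℝ ψ (G x)).det * (fderiv ℝ G x).det := by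
      simp [ContinuousLinearMap.det, LinearMap.det_comp]
    rw [hmul]
    by_cases h0 : (fderiv ℝ ψ (G x)).det = 0
    · rw [h0, zero_mul]
    · have h1 := hsupp _ h0
      have h2 : ‖x‖ < 1 / 2 := by
        have : x = G x - Δ x := by simp [G]
        rw [this]
        linarith [norm_sub_le (G x) (Δ x), hΔs x]
      have h3 : G =ᶠ[𝓝 x] g ∘ h := by
        filter_upwards [Metric.isOpen_ball.mem_nhds (mem_ball_zero_iff.2 h2)] with y hy
        have : χ y = 1 := χ.one_of_mem_closedBall (Metric.ball_subset_closedBall hy)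
        simp [G, Δ, this]
      rw [h3.fderiv_eq, fderiv_comp x (hg.differentiable one_ne_zero _)
        (hh.differentiable one_ne_zero _), det_comp_eq_zero hmk, mul_zero]
  simp only [hzero] at hintg
  simp at hintg
  linarith

theorem le_of_isOpenEmbedding_of_range_inter {Z : Type*} [TopologicalSpace Z] {k m : ℕ}
    {f : (Fin k → ℝ) → Z} {g : (Fin m → ℝ) → Z} (hf : IsOpenEmbedding f) (hg : IsOpenEmbedding g)
    (h : (range f ∩ range g).Nonempty) : k ≤ m := by
  obtain ⟨_, ⟨x, rfl⟩, hx⟩ := h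
  have hU : IsOpen (f ⁻¹' range g) := hg.isOpen_range.preimage hf.continuous
  obtain ⟨ε, hε, hball⟩ := Metric.nhds_basis_closedBall.mem_iff.1 (hU.mem_nhds hx)
  have hmem : ∀ y ∈ Metric.closedBall (0 : Fin k → ℝ) 1, ∃ z, g z = f (x + ε • y) := by
    intro y hy
    apply hball
    rw [mem_closedBall_zero_iff] at hy
    rw [mem_closedBall_iff_norm, add_sub_cancel_left, norm_smul, Real.norm_of_nonneg hε.le]
    nlinarith
  choose! F hF using hmem
  refine le_of_continuousOn_injOn_closedBall (f := F) ?_ ?_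
  · rw [hg.isInducing.continuousOn_iff]
    have : Continuous fun y => f (x + ε • y) := hf.continuous.comp (by fun_prop)
    exact this.continuousOn.congr hF
  · intro a ha b hb hab
    have h1 : f (x + ε • a) = f (x + ε • b) := by rw [← hF a ha, ← hF b hb, hab]
    have h2 := add_left_cancel (hf.injective h1)
    exact smul_right_injective _ hε.ne' h2

/-- The dimensions of the open cells contained in `Z`. -/
def cellDims (Z : Type*) [TopologicalSpace Z] : Set ℕ :=
  {k | ∃ f : (Fin k → ℝ) → Z, IsOpenEmbedding f}

theorem cellDims_subset_of_homeomorph {Z Z' : Type*} [TopologicalSpace Z] [TopologicalSpace Z']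
    (e : Z ≃ₜ Z') : cellDims Z ⊆ cellDims Z' := fun _ ⟨f, hf⟩ =>
  ⟨e ∘ f, e.isOpenEmbedding.comp hf⟩

theorem cellDims_eq_of_homeomorph {Z Z' : Type*} [TopologicalSpace Z] [TopologicalSpace Z']
    (e : Z ≃ₜ Z') : cellDims Z = cellDims Z' :=
  (cellDims_subset_of_homeomorph e).antisymm (cellDims_subset_of_homeomorph e.symm)

section Forest

variable {W : Type*}

/-- For a forest with parent function `par`, the space of functions `f : W → [0, 1]` which vanish
at each vertex whose parent has a value different from `1`. -/
def growthSet (par : W → Option W) : Set (W → ℝ) :=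
  {f | (∀ w, f w ∈ Icc (0 : ℝ) 1) ∧ ∀ w u, par w = some u → 0 < f w → f u = 1}

/-- A set of non-leaves closed under taking parents. -/
def IsInnerSubtree (par : W → Option W) (S : Set W) : Prop :=
  (∀ w ∈ S, ∀ u, par w = some u → u ∈ S) ∧ ∀ w ∈ S, ∃ c, par c = some w

/-- The vertices outside `S` which are roots or have their parent in `S`. -/
def outerBoundary (par : W → Option W) (S : Set W) : Set W :=
  {w | w ∉ S ∧ ∀ u, par w = some u → u ∈ S}

open Classical in
/-- The function equal to `1` on `S`, given by `x` on the outer boundary of `S`, and zero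
elsewhere. -/
noncomputable def cellMap (par : W → Option W) (S : Set W) (x : outerBoundary par S → ℝ) : W → ℝ :=
  fun w => if h : w ∈ outerBoundary par S then x ⟨w, h⟩ else if w ∈ S then 1 else 0

variable {par : W → Option W} {S : Set W}

theorem cellMap_of_mem {x : outerBoundary par S → ℝ} {w : W} (h : w ∈ S) :
    cellMap par S x w = 1 := by
  have : w ∉ outerBoundary par S := fun h' => h'.1 h
  simp [cellMap, this, h]

theorem cellMap_of_mem_outerBoundary {x : outerBoundary par S → ℝ} {w : W}
    (h : w ∈ outerBoundary par S) : cellMap par S x w = x ⟨w, h⟩ := by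
  simp [cellMap, h]

theorem cellMap_of_notMem {x : outerBoundary par S → ℝ} {w : W} (h : w ∉ S)
    (h' : w ∉ outerBoundary par S) : cellMap par S x w = 0 := by
  simp [cellMap, h, h']

theorem cellMap_mem_growthSet (hS : IsInnerSubtree par S) {x : outerBoundary par S → ℝ}
    (hx : ∀ w, x w ∈ Icc (0 : ℝ) 1) : cellMap par S x ∈ growthSet par := by
  constructor
  · intro w
    by_cases h : w ∈ S
    · simp [cellMap_of_mem h]
    by_cases h' : w ∈ outerBoundary par S
    · simpa [cellMap_of_mem_outerBoundary h'] using hx ⟨w, h'⟩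
    · simp [cellMap_of_notMem h h']
  · intro w u hwu hw
    by_cases h : w ∈ S
    · exact cellMap_of_mem (hS.1 w h u hwu)
    by_cases h' : w ∈ outerBoundary par S
    · exact cellMap_of_mem (h'.2 u hwu)
    · rw [cellMap_of_notMem h h'] at hw
      exact absurd hw (lt_irrefl _)

/-- A point of the growth set with values in `(0, 1)` on the outer boundary of an inner subtree
is determined by these values. -/
theorem eq_cellMap_of_mem_Ioo [Finite W] {dep : W → ℕ}
    (hdep : ∀ w u, par w = some u → dep u < dep w) (hS : IsInnerSubtree par S) {f : W → ℝ}
    (hf : f ∈ growthSet par) (h : ∀ w ∈ outerBoundary par S, f w ∈ Ioo (0 : ℝ) 1) :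
    f = cellMap par S fun w => f w := by
  have hS1 : ∀ n, ∀ w ∈ S, (∀ x, dep x ≤ n + dep w) → f w = 1 := by
    intro n
    induction n with
    | zero =>
      intro w hw hn
      obtain ⟨c, hc⟩ := hS.2 w hw
      have := hdep c w hc
      have := hn c
      omega
    | succ n ih =>
      intro w hw hn
      obtain ⟨c, hc⟩ := hS.2 w hw
      have h1 := hdep c w hc
      by_cases hcS : c ∈ S
      · refine hf.2 c w hc ?_
        rw [ih c hcS fun x => (hn x).trans (by omega)]
        exact zero_lt_one
      · refine hf.2 c w hc (h c ⟨hcS, fun u hu => ?_⟩).1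
        rw [hc, Option.some_inj] at hu
        exact hu ▸ hw
  obtain ⟨N, hN⟩ := (Set.finite_range dep).bddAbove
  have hS0 : ∀ n, ∀ w, dep w = n → w ∉ S → w ∉ outerBoundary par S → f w = 0 := by
    intro n
    induction n using Nat.strong_induction_on with
    | _ n ih =>
      intro w hw hwS hwb
      have : ∃ u, par w = some u ∧ u ∉ S := by
        by_contra! hcon
        exact hwb ⟨hwS, hcon⟩
      obtain ⟨u, hu, huS⟩ := this
      by_contra hne
      have h1 : f u = 1 := hf.2 w u hu (lt_of_le_of_ne (hf.1 w).1 (Ne.symm hne))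
      by_cases hub : u ∈ outerBoundary par S
      · exact absurd h1 (h u hub).2.ne
      · rw [ih _ (hw ▸ hdep w u hu) u rfl huS hub] at h1
        exact zero_ne_one h1
  funext w
  by_cases h1 : w ∈ S
  · rw [cellMap_of_mem h1, hS1 N w h1 fun x => (hN ⟨x, rfl⟩).trans (Nat.le_add_right _ _)]
  by_cases h2 : w ∈ outerBoundary par S
  · rw [cellMap_of_mem_outerBoundary h2]
  · rw [cellMap_of_notMem h1 h2, hS0 _ w rfl h1 h2]

/-- The open cell of the growth set associated with an inner subtree. -/
noncomputable def openCell (hS : IsInnerSubtree par S) (x : outerBoundary par S → ℝ) :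
    growthSet par :=
  ⟨cellMap par S fun w => Real.sigmoid (x w),
    cellMap_mem_growthSet hS fun _ => ⟨Real.sigmoid_nonneg _, Real.sigmoid_le_one _⟩⟩

theorem range_openCell [Finite W] {dep : W → ℕ} (hdep : ∀ w u, par w = some u → dep u < dep w)
    (hS : IsInnerSubtree par S) :
    range (openCell hS) = {f | ∀ w ∈ outerBoundary par S, f.1 w ∈ Ioo (0 : ℝ) 1} := by
  ext f
  constructor
  · rintro ⟨x, rfl⟩ w hw
    simp only [openCell, cellMap_of_mem_outerBoundary hw]
    exact ⟨Real.sigmoid_pos _, Real.sigmoid_lt_one _⟩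
  · intro hf
    have h : ∀ w : outerBoundary par S, ∃ y, Real.sigmoid y = f.1 w := fun w => by
      have := hf w w.2
      rwa [← Real.range_sigmoid] at this
    choose x hx using h
    refine ⟨x, Subtype.ext ?_⟩
    simp only [openCell, hx]
    exact (eq_cellMap_of_mem_Ioo hdep hS f.2 hf).symm

theorem isOpenEmbedding_openCell [Finite W] {dep : W → ℕ}
    (hdep : ∀ w u, par w = some u → dep u < dep w) (hS : IsInnerSubtree par S) :
    IsOpenEmbedding (openCell hS) := by
  have hsig : IsEmbedding Real.sigmoid :=
    Real.sigmoid_strictMono.isEmbedding_of_ordConnected (by rw [Real.range_sigmoid]; infer_instance)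
  refine ⟨?_, ?_⟩
  · let r : growthSet par → outerBoundary par S → ℝ := fun f w => f.1 w
    have hr : Continuous r := continuous_pi fun w => (continuous_apply _).comp continuous_subtype_val
    have hcomp : r ∘ openCell hS = Pi.map fun _ => Real.sigmoid := by
      funext x w
      exact cellMap_of_mem_outerBoundary (x := fun w => Real.sigmoid (x w)) w.2
    refine IsEmbedding.of_comp ?_ hr (hcomp ▸ IsEmbedding.piMap fun _ => hsig)
    refine Continuous.subtype_mk (continuous_pi fun w => ?_) _
    by_cases h1 : w ∈ S
    · simpa only [cellMap_of_mem h1] using continuous_const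
    by_cases h2 : w ∈ outerBoundary par S
    · simp only [cellMap_of_mem_outerBoundary h2]
      exact hsig.continuous.comp (continuous_apply _)
    · simpa only [cellMap_of_notMem h1 h2] using continuous_const
  · rw [range_openCell hdep hS]
    simp only [ofPred_forall]
    refine isOpen_iInter_of_finite fun w => isOpen_iInter_of_finite fun _ => ?_
    exact isOpen_Ioo.preimage ((continuous_apply w).comp continuous_subtype_val)

/-- The open cells are dense in the growth set. -/
theorem exists_openCell_inter [Finite W] {dep : W → ℕ}
    (hdep : ∀ w u, par w = some u → dep u < dep w) {O : Set (growthSet par)} (hO : IsOpen O)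
    (hne : O.Nonempty) :
    ∃ (S : Set W) (hS : IsInnerSubtree par S), (range (openCell hS) ∩ O).Nonempty := by
  obtain ⟨f, hf⟩ := hne
  let S : Set W := {w | f.1 w = 1 ∧ ∃ c, par c = some w}
  have hS : IsInnerSubtree par S := by
    refine ⟨fun w hw u hu => ⟨f.2.2 w u hu ?_, w, hu⟩, fun w hw => hw.2⟩
    rw [hw.1]
    exact zero_lt_one
  refine ⟨S, hS, ?_⟩
  have := Fintype.ofFinite W
  obtain ⟨ε, hε, hball⟩ := Metric.isOpen_iff.1 hO f hf
  let δ := min (ε / 2) (1 / 2)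
  have hδ : 0 < δ := by positivity
  have hδε : δ < ε := (min_le_left _ _).trans_lt (by linarith)
  have hδ2 : δ ≤ 1 / 2 := min_le_right _ _
  let x : outerBoundary par S → ℝ := fun w => max δ (min (1 - δ) (f.1 w))
  have hx : ∀ w, x w ∈ Ioo (0 : ℝ) 1 := fun w =>
    ⟨lt_max_of_lt_left hδ, max_lt (by linarith) (min_lt_of_left_lt (by linarith))⟩
  let g : growthSet par := ⟨cellMap par S x,
    cellMap_mem_growthSet hS fun w => Ioo_subset_Icc_self (hx w)⟩
  refine ⟨g, ?_, hball ?_⟩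
  · rw [range_openCell hdep hS]
    intro w hw
    simpa only [g, cellMap_of_mem_outerBoundary hw] using hx ⟨w, hw⟩
  · refine lt_of_le_of_lt ((dist_pi_le_iff hδ.le).2 fun w => ?_) hδε
    by_cases h1 : w ∈ S
    · simp only [g, cellMap_of_mem h1, h1.1, dist_self, hδ.le]
    by_cases h2 : w ∈ outerBoundary par S
    · simp only [g, cellMap_of_mem_outerBoundary h2, x]
      have := f.2.1 w
      rw [Real.dist_eq, abs_le]
      constructor <;> rcases max_cases δ (min (1 - δ) (f.1 w)) with h | h <;>
        rcases min_cases (1 - δ) (f.1 w) with h' | h' <;> linarith [this.1, this.2]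
    · have : f.1 w = 0 := by
        have : ∃ u, par w = some u ∧ u ∉ S := by
          by_contra! hcon
          exact h2 ⟨h1, hcon⟩
        obtain ⟨u, hu, huS⟩ := this
        by_contra hne
        exact huS ⟨f.2.2 w u hu (lt_of_le_of_ne (f.2.1 w).1 (Ne.symm hne)), w, hu⟩
      simp only [g, cellMap_of_notMem h1 h2, this, dist_self, hδ.le]

theorem cellDims_growthSet [Finite W] {dep : W → ℕ}
    (hdep : ∀ w u, par w = some u → dep u < dep w) :
    cellDims (growthSet par) = {k | ∃ S, IsInnerSubtree par S ∧ (outerBoundary par S).ncard = k} := by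
  have hcell : ∀ S (hS : IsInnerSubtree par S), ∃ g : (Fin (outerBoundary par S).ncard → ℝ) →
      growthSet par, IsOpenEmbedding g ∧ range g = range (openCell hS) := by
    intro S hS
    let e : Fin (outerBoundary par S).ncard ≃ outerBoundary par S :=
      (Finite.equivFinOfCardEq (Nat.card_coe_set_eq _)).symm
    let E := Homeomorph.piCongrLeft (Y := fun _ => ℝ) e
    exact ⟨openCell hS ∘ E, (isOpenEmbedding_openCell hdep hS).comp E.isOpenEmbedding,
      E.surjective.range_comp _⟩
  ext k
  constructor
  · rintro ⟨f, hf⟩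
    obtain ⟨S, hS, hne⟩ := exists_openCell_inter hdep hf.isOpen_range (range_nonempty f)
    obtain ⟨g, hg, hgr⟩ := hcell S hS
    rw [← hgr] at hne
    refine ⟨S, hS, le_antisymm (le_of_isOpenEmbedding_of_range_inter hg hf hne)
      (le_of_isOpenEmbedding_of_range_inter hf hg ?_)⟩
    rwa [inter_comm]
  · rintro ⟨S, hS, rfl⟩
    obtain ⟨g, hg, -⟩ := hcell S hS
    exact ⟨g, hg⟩

end Forest

section ForestIso

variable {W W' : Type*}

/-- The numbers of outer boundary vertices of the inner subtrees. -/
def boundaryCards (par : W → Option W) : Set ℕ :=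
  {k | ∃ S, IsInnerSubtree par S ∧ (outerBoundary par S).ncard = k}

/-- A forest with at most one branching vertex besides the root, this vertex being adjacent to
the root. -/
def IsNodForest (par : W → Option W) : Prop :=
  (∀ w, par w = none) ∨ ∃ w₀, par w₀ = none ∧ (∀ w, par w = none ∨ par w = some w₀) ∧
    2 ≤ {w | par w = some w₀}.ncard

variable {par : W → Option W} {S : Set W}

theorem isInnerSubtree_empty : IsInnerSubtree par ∅ := by
  simp [IsInnerSubtree]

theorem outerBoundary_empty : outerBoundary par ∅ = {w | par w = none} := by
  ext w
  simp [outerBoundary, Option.eq_none_iff_forall_ne_some]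

theorem IsInnerSubtree.insert (hS : IsInnerSubtree par S) {w : W} (hw : w ∈ outerBoundary par S)
    (hc : ∃ c, par c = some w) : IsInnerSubtree par (insert w S) := by
  constructor
  · rintro x (rfl | hx) u hu
    · exact mem_insert_of_mem _ (hw.2 u hu)
    · exact mem_insert_of_mem _ (hS.1 x hx u hu)
  · rintro x (rfl | hx)
    · exact hc
    · exact hS.2 x hx

theorem ncard_outerBoundary_insert [Finite W] {dep : W → ℕ}
    (hdep : ∀ w u, par w = some u → dep u < dep w) (hS : IsInnerSubtree par S) {w : W}
    (hw : w ∈ outerBoundary par S) : (outerBoundary par (insert w S)).ncard + 1 =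
      (outerBoundary par S).ncard + {x | par x = some w}.ncard := by
  have h1 : outerBoundary par (insert w S) = (outerBoundary par S \ {w}) ∪ {x | par x = some w} := by
    ext x
    constructor
    · rintro ⟨hx, hu⟩
      rw [mem_insert_iff, not_or] at hx
      by_cases hxw : par x = some w
      · exact Or.inr hxw
      · refine Or.inl ⟨⟨hx.2, fun u hxu => ?_⟩, hx.1⟩
        rcases hu u hxu with rfl | h
        · exact absurd hxu hxw
        · exact h
    · rintro (⟨⟨hx, hu⟩, hxw⟩ | hx)
      · exact ⟨by rintro (h | h); exacts [hxw h, hx h], fun u h => mem_insert_of_mem _ (hu u h)⟩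
      · have hx : par x = some w := hx
        refine ⟨?_, fun u hu => ?_⟩
        · rintro (rfl | h)
          · exact lt_irrefl _ (hdep x x hx)
          · exact hw.1 (hS.1 x h w hx)
        · rw [hx, Option.some_inj] at hu
          exact hu ▸ mem_insert _ _
  have hd : Disjoint (outerBoundary par S \ {w}) {x | par x = some w} := by
    rw [Set.disjoint_left]
    intro x hx hxw
    exact hw.1 (hx.1.2 w hxw)
  rw [h1, ncard_union_eq hd (toFinite _) (toFinite _), add_right_comm,
    ncard_sdiff_singleton_add_one hw (toFinite _)]

theorem exists_mem_outerBoundary_of_notMem {dep : W → ℕ}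
    (hdep : ∀ w u, par w = some u → dep u < dep w) {w : W} (hw : w ∉ S)
    (hc : ∃ c, par c = some w) : ∃ u ∈ outerBoundary par S, ∃ c, par c = some u := by
  induction h : dep w using Nat.strong_induction_on generalizing w with
  | _ n ih =>
    by_cases hu : ∃ u, par w = some u ∧ u ∉ S
    · obtain ⟨u, hu, huS⟩ := hu
      exact ih _ (h ▸ hdep w u hu) huS ⟨w, hu⟩ rfl
    · push Not at hu
      exact ⟨w, ⟨hw, hu⟩, hc⟩

theorem ncard_outerBoundary_lt_insert [Finite W] {dep : W → ℕ}
    (hdep : ∀ w u, par w = some u → dep u < dep w)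
    (hred : ∀ w, {x | par x = some w}.ncard ≠ 1) (hS : IsInnerSubtree par S) {w : W}
    (hw : w ∈ outerBoundary par S) (hc : ∃ c, par c = some w) :
    (outerBoundary par S).ncard < (outerBoundary par (insert w S)).ncard := by
  have h1 := ncard_outerBoundary_insert hdep hS hw
  have h2 : 0 < {x | par x = some w}.ncard := (ncard_pos (toFinite _)).2 hc
  have h3 := hred w
  omega

theorem boundaryCards_of_forall_par_eq_none (h : ∀ w, par w = none) :
    boundaryCards par = {Nat.card W} := by
  have huniv : outerBoundary par ∅ = univ := by simp [outerBoundary_empty, h]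
  have hcard : (outerBoundary par ∅).ncard = Nat.card W := by rw [huniv, ncard_univ]
  ext k
  constructor
  · rintro ⟨S, hS, rfl⟩
    have : S = ∅ := by
      refine eq_empty_of_forall_notMem fun w hw => ?_
      obtain ⟨c, hc⟩ := hS.2 w hw
      simp [h c] at hc
    rw [this, mem_singleton_iff, hcard]
  · rintro rfl
    exact ⟨∅, isInnerSubtree_empty, hcard⟩

theorem boundaryCards_of_forall_par_eq [Finite W] {dep : W → ℕ}
    (hdep : ∀ w u, par w = some u → dep u < dep w) {w₀ : W} (h₀ : par w₀ = none)
    (h : ∀ w, par w = none ∨ par w = some w₀) (hc : ∃ c, par c = some w₀) :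
    boundaryCards par = {{w | par w = none}.ncard,
      {w | par w = none}.ncard + {w | par w = some w₀}.ncard - 1} := by
  have hmem : w₀ ∈ outerBoundary par ∅ := by simpa [outerBoundary_empty] using h₀
  have h1 := ncard_outerBoundary_insert hdep isInnerSubtree_empty hmem
  rw [outerBoundary_empty] at h1
  ext k
  constructor
  · rintro ⟨S, hS, rfl⟩
    have hsub : S ⊆ {w₀} := by
      intro w hw
      obtain ⟨c, hc⟩ := hS.2 w hw
      rcases h c with hc' | hc'
      · simp [hc'] at hc
      · rw [hc', Option.some_inj] at hc
        exact hc.symm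
    rcases subset_singleton_iff_eq.1 hsub with rfl | rfl
    · left
      rw [outerBoundary_empty]
    · right
      rw [insert_empty_eq] at h1
      rw [mem_singleton_iff, ← h1, Nat.add_sub_cancel]
  · rintro (rfl | rfl)
    · exact ⟨∅, isInnerSubtree_empty, by rw [outerBoundary_empty]⟩
    · refine ⟨_, isInnerSubtree_empty.insert hmem hc, ?_⟩
      rw [← h1, Nat.add_sub_cancel]

theorem exists_equiv_of_ncard_eq [Finite W] [Finite W'] {par' : W' → Option W'} {w₀ : W} {w₀' : W'}
    (h₀ : par w₀ = none) (h : ∀ w, par w = none ∨ par w = some w₀)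
    (h₀' : par' w₀' = none) (h' : ∀ w, par' w = none ∨ par' w = some w₀')
    (hn : {w | par w = none}.ncard = {w | par' w = none}.ncard)
    (hs : {w | par w = some w₀}.ncard = {w | par' w = some w₀'}.ncard) :
    ∃ σ : W ≃ W', ∀ w, par' (σ w) = (par w).map σ := by
  classical
  let lab : W → ℕ := fun w => if w = w₀ then 0 else if par w = none then 1 else 2
  let lab' : W' → ℕ := fun w => if w = w₀' then 0 else if par' w = none then 1 else 2
  have hlab : ∀ w, (lab w = 0 ↔ w = w₀) ∧ (lab w = 1 ↔ w ∈ {w | par w = none} \ {w₀}) ∧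
      (lab w = 2 ↔ par w = some w₀) := by
    intro w
    rcases h w with h1 | h1 <;> by_cases h2 : w = w₀ <;> simp_all [lab]
  have hlab' : ∀ w, (lab' w = 0 ↔ w = w₀') ∧ (lab' w = 1 ↔ w ∈ {w | par' w = none} \ {w₀'}) ∧
      (lab' w = 2 ↔ par' w = some w₀') := by
    intro w
    rcases h' w with h1 | h1 <;> by_cases h2 : w = w₀' <;> simp_all [lab']
  have hfib : ∀ c, Nonempty ({w // lab w = c} ≃ {w // lab' w = c}) := by
    intro c
    have hcard : {w | lab w = c}.ncard = {w | lab' w = c}.ncard := by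
      match c with
      | 0 => simp [fun w => (hlab w).1, fun w => (hlab' w).1]
      | 1 =>
        simp only [fun w => (hlab w).2.1, fun w => (hlab' w).2.1]
        change ({w | par w = none} \ {w₀}).ncard = ({w | par' w = none} \ {w₀'}).ncard
        rw [ncard_sdiff_singleton_of_mem (show w₀ ∈ {w | par w = none} from h₀),
          ncard_sdiff_singleton_of_mem (show w₀' ∈ {w | par' w = none} from h₀'), hn]
      | 2 => simpa only [fun w => (hlab w).2.2, fun w => (hlab' w).2.2] using hs
      | n + 3 =>
        have h1 : ∀ w, lab w ≠ n + 3 := fun w => by simp only [lab]; split_ifs <;> omega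
        have h2 : ∀ w, lab' w ≠ n + 3 := fun w => by simp only [lab']; split_ifs <;> omega
        simp [h1, h2]
    exact Finite.card_eq.1 hcard
  let σ := Equiv.ofFiberEquiv fun c => (hfib c).some
  have hσ : ∀ w, lab' (σ w) = lab w := fun w => Equiv.ofFiberEquiv_map _ w
  have hσ₀ : σ w₀ = w₀' := by rw [← (hlab' _).1, hσ, (hlab _).1]
  refine ⟨σ, fun w => ?_⟩
  by_cases hw : w = w₀
  · rw [hw, hσ₀, h₀, h₀', Option.map_none]
  rcases h w with h1 | h1
  · rw [h1, Option.map_none]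
    have := (hlab w).2.1.2 ⟨h1, hw⟩
    rw [← hσ] at this
    exact ((hlab' _).2.1.1 this).1
  · rw [h1, Option.map_some, hσ₀]
    have := (hlab w).2.2.2 h1
    rw [← hσ] at this
    exact (hlab' _).2.2.1 this

/-- A nod forest is determined by its boundary numbers among the forests without vertices of
order two. -/
theorem exists_equiv_of_boundaryCards_eq [Finite W] [Finite W'] {par' : W' → Option W'}
    {dep : W → ℕ} (hdep : ∀ w u, par w = some u → dep u < dep w)
    {dep' : W' → ℕ} (hdep' : ∀ w u, par' w = some u → dep' u < dep' w)
    (hred' : ∀ w, {x | par' x = some w}.ncard ≠ 1)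
    (hpar : IsNodForest par) (hcards : boundaryCards par = boundaryCards par') :
    ∃ σ : W ≃ W', ∀ w, par' (σ w) = (par w).map σ := by
  have hempty : {w | par' w = none}.ncard ∈ boundaryCards par' :=
    ⟨∅, isInnerSubtree_empty, by rw [outerBoundary_empty]⟩
  have hstar : (¬ ∃ w, par' w = none ∧ ∃ c, par' c = some w) → ∀ w, par' w = none := by
    intro hno w
    by_contra hw
    obtain ⟨u, hu⟩ := Option.ne_none_iff_exists'.1 hw
    obtain ⟨v, hv, hc⟩ := exists_mem_outerBoundary_of_notMem hdep' (notMem_empty u) ⟨w, hu⟩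
    rw [outerBoundary_empty] at hv
    exact hno ⟨v, hv, hc⟩
  rcases hpar with hX | ⟨w₀, h₀, hX, hc2⟩
  · rw [boundaryCards_of_forall_par_eq_none hX] at hcards
    have hY : ∀ w, par' w = none := by
      refine hstar ?_
      rintro ⟨w, hw, hc⟩
      have hwb : w ∈ outerBoundary par' ∅ := by rwa [outerBoundary_empty]
      have h1 := ncard_outerBoundary_lt_insert hdep' hred' isInnerSubtree_empty hwb hc
      have h2 : (outerBoundary par' (insert w ∅)).ncard ∈ boundaryCards par' :=
        ⟨_, isInnerSubtree_empty.insert hwb hc, rfl⟩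
      rw [outerBoundary_empty] at h1
      rw [← hcards] at h2 hempty
      rw [mem_singleton_iff] at h2 hempty
      omega
    rw [boundaryCards_of_forall_par_eq_none hY, singleton_eq_singleton_iff] at hcards
    obtain ⟨σ⟩ : Nonempty (W ≃ W') := Finite.card_eq.1 hcards
    exact ⟨σ, fun w => by rw [hX, hY, Option.map_none]⟩
  · have hc : ∃ c, par c = some w₀ := by
      refine (ncard_pos (s := {w | par w = some w₀}) (toFinite _)).1 ?_
      omega
    have hpos : 0 < {w | par w = none}.ncard := (ncard_pos (toFinite _)).2 ⟨w₀, h₀⟩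
    rw [boundaryCards_of_forall_par_eq hdep h₀ hX hc] at hcards
    obtain ⟨w₁, h₁, hc₁⟩ : ∃ w, par' w = none ∧ ∃ c, par' c = some w := by
      by_contra hno
      rw [boundaryCards_of_forall_par_eq_none (hstar hno)] at hcards
      have h1 := hcards.le (mem_insert _ _)
      have h2 := hcards.le (mem_insert_of_mem _ (mem_singleton _))
      rw [mem_singleton_iff] at h1 h2
      omega
    have hwb : w₁ ∈ outerBoundary par' ∅ := by rwa [outerBoundary_empty]
    have hin := isInnerSubtree_empty.insert hwb hc₁
    have hlt := ncard_outerBoundary_lt_insert hdep' hred' isInnerSubtree_empty hwb hc₁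
    have heq := ncard_outerBoundary_insert hdep' isInnerSubtree_empty hwb
    have hmem : (outerBoundary par' (insert w₁ ∅)).ncard ∈ boundaryCards par' := ⟨_, hin, rfl⟩
    rw [outerBoundary_empty] at hlt heq
    have hleaf : ∀ w, (∃ c, par' c = some w) → w = w₁ := by
      intro w hcw
      by_contra hw
      have hw' : w ∉ insert w₁ (∅ : Set W') := by simpa using hw
      obtain ⟨u, hu, hcu⟩ := exists_mem_outerBoundary_of_notMem hdep' hw' hcw
      have hlt' := ncard_outerBoundary_lt_insert hdep' hred' hin hu hcu
      have hmem' : (outerBoundary par' (insert u (insert w₁ ∅))).ncard ∈ boundaryCards par' :=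
        ⟨_, hin.insert hu hcu, rfl⟩
      rw [← hcards] at hempty hmem hmem'
      simp only [mem_insert_iff, mem_singleton_iff] at hempty hmem hmem'
      omega
    rw [← hcards] at hempty hmem
    simp only [mem_insert_iff, mem_singleton_iff] at hempty hmem
    refine exists_equiv_of_ncard_eq h₀ hX h₁ (fun w => ?_) (by omega) (by omega)
    rcases hw : par' w with _ | u
    · exact Or.inl rfl
    · exact Or.inr (congrArg some (hleaf u ⟨w, hw⟩))

end ForestIso

/-- A presentation of a subset `Z` of `Y` as a tree with root `q`: the vertices other than the
root are indexed by `W`, and `path w` runs on `[0, 1]` from the parent of the vertex `w` to `w`. -/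
structure RootedArcs (Y : Type*) [TopologicalSpace Y] (q : Y) (Z : Set Y) (W : Type*) where
  /-- The parent of a vertex, `none` standing for the root. -/
  par : W → Option W
  /-- A height function. -/
  dep : W → ℕ
  /-- The arc from the parent of a vertex to the vertex. -/
  path : W → ℝ → Y
  dep_lt : ∀ w u, par w = some u → dep u < dep w
  continuous_path : ∀ w, Continuous (path w)
  path_zero : ∀ w, path w 0 = (par w).elim q fun u => path u 1
  path_inj : ∀ w w' s t, s ∈ Ioc (0 : ℝ) 1 → t ∈ Ioc (0 : ℝ) 1 → path w s = path w' t →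
    w = w' ∧ s = t
  path_ne : ∀ w, ∀ s ∈ Ioc (0 : ℝ) 1, path w s ≠ q
  carrier_eq : insert q (⋃ w, path w '' Ioc 0 1) = Z

namespace RootedArcs

section Lift

variable {Y : Type*} [TopologicalSpace Y] {q : Y} {W : Type*}

theorem eq_root_or_exists (D : RootedArcs Y q univ W) (y : Y) :
    y = q ∨ ∃ w, ∃ t ∈ Ioc (0 : ℝ) 1, D.path w t = y := by
  have hy : y ∈ insert q (⋃ w, D.path w '' Ioc 0 1) := by
    rw [D.carrier_eq]
    trivial
  simpa only [mem_insert_iff, mem_iUnion, mem_image] using hy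

theorem exists_lift [T2Space Y] [Finite W] (D : RootedArcs Y q univ W) {Z : Type*}
    [TopologicalSpace Z] (z₀ : Z) (F : W → ℝ → Z) (hF : ∀ w, ContinuousOn (F w) (Icc 0 1))
    (h₀ : ∀ w, F w 0 = (D.par w).elim z₀ fun u => F u 1) :
    ∃ G : Y → Z, Continuous G ∧ G q = z₀ ∧ ∀ w, ∀ t ∈ Icc (0 : ℝ) 1, G (D.path w t) = F w t := by
  have hex : ∀ y, ∃ z, (y = q ∧ z = z₀) ∨ ∃ w, ∃ t ∈ Ioc (0 : ℝ) 1, D.path w t = y ∧ z = F w t := by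
    intro y
    rcases D.eq_root_or_exists y with h | ⟨w, t, ht, h⟩
    · exact ⟨z₀, Or.inl ⟨h, rfl⟩⟩
    · exact ⟨F w t, Or.inr ⟨w, t, ht, h, rfl⟩⟩
  choose G hG using hex
  have hq : G q = z₀ := by
    rcases hG q with ⟨-, h⟩ | ⟨w, t, ht, h, -⟩
    · exact h
    · exact absurd h (D.path_ne w t ht)
  have hpos : ∀ w, ∀ t ∈ Ioc (0 : ℝ) 1, G (D.path w t) = F w t := by
    intro w t ht
    rcases hG (D.path w t) with ⟨h, -⟩ | ⟨w', t', ht', h, h'⟩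
    · exact absurd h (D.path_ne w t ht)
    · obtain ⟨rfl, rfl⟩ := D.path_inj _ _ _ _ ht' ht h
      exact h'
  have hall : ∀ w, ∀ t ∈ Icc (0 : ℝ) 1, G (D.path w t) = F w t := by
    intro w t ht
    rcases ht.1.eq_or_lt with rfl | h
    · rw [D.path_zero, h₀]
      rcases D.par w with _ | u
      · exact hq
      · exact hpos u 1 ⟨one_pos, le_rfl⟩
    · exact hpos w t ⟨h, ht.2⟩
  refine ⟨G, ?_, hq, hall⟩
  rw [continuous_iff_isClosed]
  intro C hC
  have hpre : G ⁻¹' C = {y | y = q ∧ z₀ ∈ C} ∪ ⋃ w, D.path w '' (Icc 0 1 ∩ F w ⁻¹' C) := by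
    ext y
    constructor
    · intro hy
      rcases D.eq_root_or_exists y with rfl | ⟨w, t, ht, rfl⟩
      · exact Or.inl ⟨rfl, hq ▸ hy⟩
      · have ht' := Ioc_subset_Icc_self ht
        exact Or.inr (mem_iUnion.2 ⟨w, t, ⟨ht', by rw [mem_preimage, ← hall w t ht']; exact hy⟩, rfl⟩)
    · rintro (⟨rfl, h⟩ | h)
      · rw [mem_preimage, hq]
        exact h
      · obtain ⟨w, t, ⟨ht, htC⟩, rfl⟩ := mem_iUnion.1 h
        rw [mem_preimage, hall w t ht]
        exact htC
  rw [hpre]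
  refine IsClosed.union ?_ (isClosed_iUnion_of_finite fun w => ?_)
  · exact ((finite_singleton q).subset fun y hy => hy.1).isClosed
  · refine IsCompact.isClosed (IsCompact.image ?_ (D.continuous_path w))
    exact isCompact_Icc.of_isClosed_subset ((hF w).preimage_isClosed_of_isClosed isClosed_Icc hC)
      inter_subset_left

theorem exists_homeomorph {Y' : Type*} [TopologicalSpace Y'] {q' : Y'} {W' : Type*} [T2Space Y]
    [T2Space Y'] [Finite W] [Finite W'] (D : RootedArcs Y q univ W) (D' : RootedArcs Y' q' univ W')
    (σ : W ≃ W') (hσ : ∀ w, D'.par (σ w) = (D.par w).map σ) : ∃ h : Y ≃ₜ Y', h q = q' := by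
  obtain ⟨G, hG, hq, hp⟩ := D.exists_lift q' (fun w => D'.path (σ w))
    (fun w => (D'.continuous_path _).continuousOn)
    (fun w => by rw [D'.path_zero, hσ]; cases D.par w <;> rfl)
  obtain ⟨G', hG', hq', hp'⟩ := D'.exists_lift q (fun w => D.path (σ.symm w))
    (fun w => (D.continuous_path _).continuousOn) (fun w => by
      have := hσ (σ.symm w)
      rw [σ.apply_symm_apply] at this
      rw [D.path_zero, this]
      cases D.par (σ.symm w) <;> simp)
  refine ⟨⟨⟨G, G', fun y => ?_, fun y => ?_⟩, hG, hG'⟩, hq⟩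
  · rcases D.eq_root_or_exists y with rfl | ⟨w, t, ht, rfl⟩
    · rw [hq, hq']
    · rw [hp w t (Ioc_subset_Icc_self ht), hp' _ t (Ioc_subset_Icc_self ht), σ.symm_apply_apply]
  · rcases D'.eq_root_or_exists y with rfl | ⟨w, t, ht, rfl⟩
    · rw [hq', hq]
    · rw [hp' w t (Ioc_subset_Icc_self ht), hp _ t (Ioc_subset_Icc_self ht), σ.apply_symm_apply]

/-- For each vertex `w`, there is a continuous function on the tree which is the parameter on the
arc of `w`, constantly `1` beyond `w`, and `0` elsewhere. -/
theorem exists_height [T2Space Y] [Finite W] (D : RootedArcs Y q univ W) (w : W) :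
    ∃ ρ : Y → ℝ, Continuous ρ ∧ ρ q = 0 ∧ (∀ t ∈ Icc (0 : ℝ) 1, ρ (D.path w t) = t) ∧
      (∀ x, D.par x = some w → ∀ t ∈ Icc (0 : ℝ) 1, ρ (D.path x t) = 1) ∧
      ∀ y, (ρ y = 0 ∨ ρ y = 1) ∨ ∃ t ∈ Ioc (0 : ℝ) 1, y = D.path w t := by
  classical
  let b : W → Prop := Relation.TransGen (fun u x => D.par x = some u) w
  have hb : ∀ x u, D.par x = some u → (b x ↔ u = w ∨ b u) := by
    intro x u hu
    calc b x ↔ ∃ v, Relation.ReflTransGen (fun u x => D.par x = some u) w v ∧ D.par x = some v :=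
          Relation.TransGen.tail'_iff
      _ ↔ _ := by
        simp only [hu, Option.some_inj, exists_eq_right', Relation.reflTransGen_iff_eq_or_transGen,
          b]
  have hb' : ∀ x, D.par x = none → ¬ b x := by
    intro x hx h
    obtain ⟨u, -, hu⟩ := Relation.TransGen.tail'_iff.1 h
    simp [hx] at hu
  have hdep : ∀ x, b x → D.dep w < D.dep x := by
    intro x hx
    induction hx with
    | single h => exact D.dep_lt _ _ h
    | tail _ h ih => exact ih.trans (D.dep_lt _ _ h)
  obtain ⟨ρ, hρ, hq, hp⟩ := D.exists_lift (0 : ℝ)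
    (fun x t => if x = w then t else if b x then 1 else 0)
    (fun x => by split_ifs <;> fun_prop) (fun x => by
      by_cases hx : x = w
      · subst hx
        rcases hu : D.par x with _ | u
        · simp
        · have h1 := D.dep_lt x u hu
          have h2 : ¬ b u := fun h => h1.asymm (hdep u h)
          have h3 : u ≠ x := by rintro rfl; exact lt_irrefl _ h1
          simp [h2, h3]
      · rcases hu : D.par x with _ | u
        · simp [hx, hb' x hu]
        · simp only [hx, if_false, Option.elim_some, hb x u hu]
          split_ifs <;> simp_all)
  refine ⟨ρ, hρ, hq, fun t ht => by simp [hp w t ht], fun x hx t ht => ?_, fun y => ?_⟩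
  · have h1 : x ≠ w := by rintro rfl; exact lt_irrefl _ (D.dep_lt x x hx)
    simp [hp x t ht, h1, (hb x w hx).2 (Or.inl rfl)]
  · rcases D.eq_root_or_exists y with rfl | ⟨x, t, ht, rfl⟩
    · exact Or.inl (Or.inl hq)
    · by_cases hx : x = w
      · exact Or.inr ⟨t, ht, by rw [hx]⟩
      · rw [hp x t (Ioc_subset_Icc_self ht)]
        simp only [hx, if_false]
        split_ifs <;> simp

end Lift

end RootedArcs

namespace RootedArcs

section Grow

variable {Y : Type*} {q : Y} {W : Type*}

/-- The subtree made of the initial pieces of length `f w` of the arcs. -/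
def grow [TopologicalSpace Y] (D : RootedArcs Y q univ W) (f : W → ℝ) : Set Y :=
  insert q (⋃ w, D.path w '' Ioc 0 (f w))

section Topological

variable [TopologicalSpace Y] (D : RootedArcs Y q univ W) {f g : W → ℝ}

theorem path_mem_grow {w : W} {t : ℝ} (ht : t ∈ Ioc 0 (f w)) : D.path w t ∈ D.grow f :=
  Or.inr (mem_iUnion.2 ⟨w, t, ht, rfl⟩)

theorem path_mem_grow_iff (hf : f ∈ growthSet D.par) {w : W} {t : ℝ} (ht : t ∈ Ioc (0 : ℝ) 1) :
    D.path w t ∈ D.grow f ↔ t ≤ f w := by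
  refine ⟨?_, fun h => D.path_mem_grow ⟨ht.1, h⟩⟩
  rintro (h | h)
  · exact absurd h (D.path_ne w t ht)
  · obtain ⟨w', t', ht', h⟩ := mem_iUnion.1 h
    obtain ⟨rfl, rfl⟩ := D.path_inj _ _ _ _ ⟨ht'.1, ht'.2.trans (hf.1 _).2⟩ ht h
    exact ht'.2

theorem path_zero_mem_grow (hf : f ∈ growthSet D.par) {w : W} (hw : 0 < f w) :
    D.path w 0 ∈ D.grow f := by
  rw [D.path_zero]
  rcases hu : D.par w with _ | u
  · exact mem_insert _ _
  · refine D.path_mem_grow ⟨one_pos, ?_⟩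
    rw [hf.2 w u hu hw]

theorem isCompact_grow [Finite W] (hf : f ∈ growthSet D.par) : IsCompact (D.grow f) := by
  have h : D.grow f = insert q (⋃ w ∈ {w | 0 < f w}, D.path w '' Icc 0 (f w)) := by
    refine (insert_subset_insert ?_).antisymm (insert_subset (mem_insert _ _) ?_)
    · refine iUnion_subset fun w => ?_
      rintro _ ⟨t, ht, rfl⟩
      exact mem_biUnion (show w ∈ {w | 0 < f w} from ht.1.trans_le ht.2)
        ⟨t, Ioc_subset_Icc_self ht, rfl⟩
    · refine iUnion₂_subset fun w hw => ?_
      rintro _ ⟨t, ht, rfl⟩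
      rcases ht.1.eq_or_lt with rfl | h
      · exact D.path_zero_mem_grow hf hw
      · exact D.path_mem_grow ⟨h, ht.2⟩
  rw [h]
  exact ((toFinite {w | 0 < f w}).isCompact_biUnion fun w _ =>
    isCompact_Icc.image (D.continuous_path w)).insert q

theorem isConnected_grow (hf : f ∈ growthSet D.par) : IsConnected (D.grow f) := by
  refine ⟨⟨q, mem_insert _ _⟩, ?_⟩
  have key : ∀ w, 0 < f w → ∃ T ⊆ D.grow f, q ∈ T ∧ D.path w '' Icc 0 (f w) ⊆ T ∧
      IsPreconnected T := by
    intro w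
    induction h : D.dep w using Nat.strong_induction_on generalizing w with
    | _ n ih =>
      intro hw
      have hsub : D.path w '' Icc 0 (f w) ⊆ D.grow f := by
        rintro _ ⟨t, ht, rfl⟩
        rcases ht.1.eq_or_lt with rfl | h
        · exact D.path_zero_mem_grow hf hw
        · exact D.path_mem_grow ⟨h, ht.2⟩
      have hpre : IsPreconnected (D.path w '' Icc 0 (f w)) :=
        isPreconnected_Icc.image _ (D.continuous_path w).continuousOn
      have h0 : D.path w 0 ∈ D.path w '' Icc 0 (f w) := ⟨0, ⟨le_rfl, hw.le⟩, rfl⟩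
      rcases hu : D.par w with _ | u
      · refine ⟨_, hsub, ?_, subset_rfl, hpre⟩
        rwa [D.path_zero, hu] at h0
      · have hfu := hf.2 w u hu hw
        obtain ⟨T, hT, hq, hTu, hTc⟩ := ih _ (h ▸ D.dep_lt w u hu) u rfl (by rw [hfu]; exact one_pos)
        refine ⟨T ∪ _, union_subset hT hsub, Or.inl hq, subset_union_right,
          hTc.union (D.path w 0) (hTu ⟨1, ?_, ?_⟩) h0 hpre⟩
        · rw [hfu]
          exact ⟨zero_le_one, le_rfl⟩
        · rw [D.path_zero, hu, Option.elim_some]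
  refine isPreconnected_of_forall q fun y hy => ?_
  rcases hy with rfl | hy
  · exact ⟨{y}, singleton_subset_iff.2 (mem_insert _ _), rfl, rfl, isPreconnected_singleton⟩
  · obtain ⟨w, t, ht, rfl⟩ := mem_iUnion.1 hy
    obtain ⟨T, hT, hq, hTw, hTc⟩ := key w (ht.1.trans_le ht.2)
    exact ⟨T, hT, hq, hTw ⟨t, Ioc_subset_Icc_self ht, rfl⟩, hTc⟩

theorem le_of_grow_subset (hf : f ∈ growthSet D.par) (hg : g ∈ growthSet D.par)
    (h : D.grow f ⊆ D.grow g) (w : W) : f w ≤ g w := by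
  rcases (hf.1 w).1.eq_or_lt with h0 | h0
  · rw [← h0]
    exact (hg.1 w).1
  · exact (D.path_mem_grow_iff hg ⟨h0, (hf.1 w).2⟩).1 (h (D.path_mem_grow ⟨h0, le_rfl⟩))

theorem exists_grow_eq [T2Space Y] [Finite W] {B : Set Y} (hB : IsCompact B)
    (hBc : IsPreconnected B) (hq : q ∈ B) : ∃ f ∈ growthSet D.par, D.grow f = B := by
  choose ρ hρ hρq hρw hρc hρe using D.exists_height
  have hmax : ∀ w, ∃ y ∈ B, ∀ z ∈ B, ρ w z ≤ ρ w y := fun w =>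
    hB.exists_isMaxOn ⟨q, hq⟩ (hρ w).continuousOn
  choose m hmB hm using hmax
  have hle : ∀ w y, ρ w y ≤ 1 := by
    intro w y
    rcases hρe w y with (h | h) | ⟨t, ht, rfl⟩
    · linarith
    · exact h.le
    · rw [hρw w t (Ioc_subset_Icc_self ht)]
      exact ht.2
  have hmem : ∀ w, ∀ t ∈ Ioc 0 (ρ w (m w)), D.path w t ∈ B := by
    intro w t ht
    have hsub : Ioo 0 (ρ w (m w)) ⊆ D.path w ⁻¹' B := by
      intro s hs
      have himg := (hBc.image (ρ w) (hρ w).continuousOn).Icc_subset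
        (mem_image_of_mem _ hq) (mem_image_of_mem _ (hmB w))
      rw [hρq] at himg
      obtain ⟨z, hz, hzs⟩ := himg (Ioo_subset_Icc_self hs)
      have h1 := hs.2.trans_le (hle w _)
      rcases hρe w z with (h | h) | ⟨r, hr, rfl⟩
      · linarith [hs.1]
      · linarith
      · rw [hρw w r (Ioc_subset_Icc_self hr)] at hzs
        exact hzs ▸ hz
    have hcl := closure_minimal hsub (hB.isClosed.preimage (D.continuous_path w))
    rw [closure_Ioo (ht.1.trans_le ht.2).ne] at hcl
    exact hcl (Ioc_subset_Icc_self ht)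
  have h0 : ∀ w, 0 ≤ ρ w (m w) := fun w => (hρq w).ge.trans (hm w q hq)
  refine ⟨fun w => ρ w (m w), ⟨fun w => ⟨h0 w, hle w _⟩, fun w u hu hw => ?_⟩, ?_⟩
  · refine (hle u _).antisymm ?_
    have h1 := hm u _ (hmem w _ ⟨hw, le_rfl⟩)
    rwa [hρc u w hu _ ⟨h0 w, hle w _⟩] at h1
  · refine (insert_subset hq (iUnion_subset fun w => ?_)).antisymm fun y hy => ?_
    · rintro _ ⟨t, ht, rfl⟩
      exact hmem w t ht
    · rcases D.eq_root_or_exists y with rfl | ⟨w, t, ht, rfl⟩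
      · exact mem_insert _ _
      · refine D.path_mem_grow ⟨ht.1, ?_⟩
        have h1 := hm w _ hy
        rwa [hρw w t (Ioc_subset_Icc_self ht)] at h1

theorem isCompact_growthSet (par : W → Option W) : IsCompact (growthSet par) := by
  refine (isCompact_univ_pi fun _ : W => isCompact_Icc (a := (0 : ℝ)) (b := 1)).of_isClosed_subset
    ?_ fun f hf w _ => hf.1 w
  have h : growthSet par = (⋂ w, {f | f w ∈ Icc (0 : ℝ) 1}) ∩
      ⋂ w, ⋂ u, ⋂ _ : par w = some u, ({f | f w ≤ 0} ∪ {f | f u = 1}) := by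
    ext f
    simp only [growthSet, mem_ofPred_eq, mem_inter_iff, mem_iInter, mem_union]
    refine and_congr_right fun _ => forall₃_congr fun w u _ => ?_
    rw [← not_lt, imp_iff_not_or]
  rw [h]
  refine (isClosed_iInter fun w => isClosed_Icc.preimage (continuous_apply w)).inter
    (isClosed_iInter fun w => isClosed_iInter fun u => isClosed_iInter fun _ => ?_)
  exact (isClosed_le (continuous_apply w) continuous_const).union
    (isClosed_eq (continuous_apply u) continuous_const)

end Topological

theorem exists_dist_le_of_mem_grow [MetricSpace Y] (D : RootedArcs Y q univ W) {f g : W → ℝ}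
    (hf : f ∈ growthSet D.par) (hg : g ∈ growthSet D.par) {ε δ : ℝ} (hε : 0 < ε) (hδ : δ ≤ 1)
    (hD : ∀ w, ∀ s ∈ Icc (0 : ℝ) 1, ∀ t ∈ Icc (0 : ℝ) 1, |s - t| < δ →
      dist (D.path w s) (D.path w t) < ε) (hfg : ∀ w, |f w - g w| < δ) :
    ∀ x ∈ D.grow f, ∃ y ∈ D.grow g, dist x y ≤ ε + ε := by
  rintro x (rfl | hx)
  · exact ⟨x, mem_insert _ _, by rw [dist_self]; positivity⟩
  obtain ⟨w, s, hs, rfl⟩ := mem_iUnion.1 hx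
  have hs1 : s ∈ Icc (0 : ℝ) 1 := ⟨hs.1.le, hs.2.trans (hf.1 w).2⟩
  rcases le_or_gt s (g w) with hsg | hsg
  · exact ⟨_, D.path_mem_grow ⟨hs.1, hsg⟩, by rw [dist_self]; positivity⟩
  have hclose : dist (D.path w s) (D.path w (g w)) < ε := by
    refine hD w s hs1 _ (hg.1 w) ?_
    have := (abs_lt.1 (hfg w)).2
    rw [abs_lt]
    constructor <;> linarith [hs.2]
  rcases (hg.1 w).1.eq_or_lt with h0 | h0
  · rw [← h0, D.path_zero] at hclose
    rcases hu : D.par w with _ | u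
    · rw [hu] at hclose
      exact ⟨q, mem_insert _ _, by rw [Option.elim_none] at hclose; linarith⟩
    · rw [hu, Option.elim_some] at hclose
      have hfu := hf.2 w u hu (hs.1.trans_le hs.2)
      have hgu := hfg u
      rw [hfu] at hgu
      have hpos : 0 < g u := by linarith [(abs_lt.1 hgu).2]
      refine ⟨_, D.path_mem_grow ⟨hpos, le_rfl⟩, (dist_triangle _ (D.path u 1) _).trans ?_⟩
      exact add_le_add hclose.le (hD u 1 ⟨zero_le_one, le_rfl⟩ _ (hg.1 u) hgu).le
  · exact ⟨_, D.path_mem_grow ⟨h0, le_rfl⟩, by linarith⟩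

theorem exists_uniform [MetricSpace Y] [Finite W] (D : RootedArcs Y q univ W) {ε : ℝ} (hε : 0 < ε) :
    ∃ δ, 0 < δ ∧ δ ≤ 1 ∧ ∀ w, ∀ s ∈ Icc (0 : ℝ) 1, ∀ t ∈ Icc (0 : ℝ) 1, |s - t| < δ →
      dist (D.path w s) (D.path w t) < ε := by
  have h : ∀ w, ∃ δ > 0, ∀ s ∈ Icc (0 : ℝ) 1, ∀ t ∈ Icc (0 : ℝ) 1, dist s t < δ →
      dist (D.path w s) (D.path w t) < ε := fun w =>
    Metric.uniformContinuousOn_iff.1 (isCompact_Icc.uniformContinuousOn_of_continuous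
      (D.continuous_path w).continuousOn) ε hε
  choose δ hδ hD using h
  obtain ⟨η, hη, hle⟩ : ∃ η > 0, ∀ w, η ≤ δ w := by
    cases isEmpty_or_nonempty W
    · exact ⟨1, one_pos, fun w => isEmptyElim w⟩
    · obtain ⟨w, hw⟩ := Finite.exists_min δ
      exact ⟨δ w, hδ w, hw⟩
  exact ⟨min η 1, lt_min hη one_pos, min_le_right _ _, fun w s hs t ht hst =>
    hD w s hs t ht (hst.trans_le ((min_le_left _ _).trans (hle w)))⟩

end Grow

universe v

variable {Y : Type v} [MetricSpace Y] {q : Y} {W : Type*} [Finite W]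

/-- The element of `C(q, Y)` determined by a point of the growth set. -/
noncomputable def growCP (D : RootedArcs Y q univ W) (f : growthSet D.par) : CP Y q :=
  ⟨⟨⟨D.grow f, D.isCompact_grow f.2⟩, (D.isConnected_grow f.2).1⟩, D.isConnected_grow f.2,
    mem_insert _ _⟩

theorem continuous_growCP (D : RootedArcs Y q univ W) : Continuous D.growCP := by
  have := Fintype.ofFinite W
  rw [Metric.continuous_iff]
  intro f ε hε
  obtain ⟨δ, hδ, hδ1, hD⟩ := D.exists_uniform (show 0 < ε / 3 by positivity)
  refine ⟨δ, hδ, fun g hgf => ?_⟩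
  have hgf' : ∀ w, |g.1 w - f.1 w| < δ := fun w => (dist_le_pi_dist g.1 f.1 w).trans_lt hgf
  have hfg' : ∀ w, |f.1 w - g.1 w| < δ := fun w => by rw [abs_sub_comm]; exact hgf' w
  have hdist : Metric.hausdorffDist (D.grow g) (D.grow f) ≤ ε / 3 + ε / 3 :=
    Metric.hausdorffDist_le_of_mem_dist (by positivity)
      (D.exists_dist_le_of_mem_grow g.2 f.2 (by positivity) hδ1 hD hgf')
      (D.exists_dist_le_of_mem_grow f.2 g.2 (by positivity) hδ1 hD hfg')
  change Metric.hausdorffDist (D.grow g) (D.grow f) < ε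
  linarith

theorem bijective_growCP (D : RootedArcs Y q univ W) : Function.Bijective D.growCP := by
  constructor
  · intro f g hfg
    have h : D.grow f = D.grow g := congrArg CP.set hfg
    exact Subtype.ext (funext fun w => (D.le_of_grow_subset f.2 g.2 h.subset w).antisymm
      (D.le_of_grow_subset g.2 f.2 h.superset w))
  · rintro ⟨B, hBc, hB⟩
    obtain ⟨f, hf, h⟩ := D.exists_grow_eq B.isCompact hBc.isPreconnected hB
    exact ⟨⟨f, hf⟩, Subtype.ext (NonemptyCompacts.ext h)⟩

theorem cellDims_CP (D : RootedArcs Y q univ W) : cellDims (CP Y q) = boundaryCards D.par := by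
  have := isCompact_iff_compactSpace.1 (isCompact_growthSet D.par)
  let e : growthSet D.par ≃ₜ CP Y q := Continuous.homeoOfEquivCompactToT2
    (f := Equiv.ofBijective _ D.bijective_growCP) D.continuous_growCP
  rw [← cellDims_eq_of_homeomorph e, cellDims_growthSet D.dep_lt]
  rfl

end RootedArcs

section Concat

variable {Y : Type*}

/-- The concatenation of two paths parametrized by `[0, 1]`. -/
noncomputable def concat (α β : ℝ → Y) (t : ℝ) : Y :=
  if t ≤ 1 / 2 then α (2 * t) else β (2 * t - 1)

theorem concat_zero (α β : ℝ → Y) : concat α β 0 = α 0 := by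
  simp [concat]

theorem concat_one (α β : ℝ → Y) : concat α β 1 = β 1 := by
  norm_num [concat]

theorem continuous_concat [TopologicalSpace Y] {α β : ℝ → Y} (hα : Continuous α)
    (hβ : Continuous β) (h : α 1 = β 0) : Continuous (concat α β) := by
  refine Continuous.if_le (by fun_prop) (by fun_prop) continuous_id continuous_const ?_
  rintro t rfl
  norm_num [h]

theorem injOn_concat {α β : ℝ → Y} {S : Set ℝ} (hα : InjOn α (Icc 0 1)) (hβ : InjOn β S)
    (h : ∀ s ∈ Icc (0 : ℝ) 1, ∀ t ∈ S, α s = β t → s = 1 ∧ t = 0) :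
    InjOn (concat α β) {t | 0 ≤ t ∧ (1 / 2 < t → 2 * t - 1 ∈ S)} := by
  intro s hs t ht hst
  simp only [concat] at hst
  split_ifs at hst with h1 h2 h2
  · have := hα ⟨by linarith [hs.1], by linarith⟩ ⟨by linarith [ht.1], by linarith⟩ hst
    linarith
  · have := h _ ⟨by linarith [hs.1], by linarith⟩ _ (ht.2 (not_le.1 h2)) hst
    linarith [this.2]
  · have := h _ ⟨by linarith [ht.1], by linarith⟩ _ (hs.2 (not_le.1 h1)) hst.symm
    linarith [this.2]
  · have := hβ (hs.2 (not_le.1 h1)) (ht.2 (not_le.1 h2)) hst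
    linarith

theorem concat_mem {α β : ℝ → Y} {Z : Set Y} (hα : MapsTo α (Icc 0 1) Z)
    (hβ : MapsTo β (Icc 0 1) Z) : MapsTo (concat α β) (Icc 0 1) Z := by
  intro t ht
  simp only [concat]
  split_ifs with h
  · exact hα ⟨by linarith [ht.1], by linarith⟩
  · exact hβ ⟨by linarith [not_le.1 h], by linarith [ht.2]⟩

theorem isSimpleClosedCurve_image {Y : Type*} [TopologicalSpace Y] [T2Space Y] {f : ℝ → Y}
    (hf : Continuous f) (hinj : InjOn f (Ico 0 1)) (h : f 0 = f 1) :
    IsSimpleClosedCurve (f '' Ico 0 1) := by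
  have : Fact ((0 : ℝ) < 1) := ⟨one_pos⟩
  let F : AddCircle (1 : ℝ) → Y := AddCircle.liftIco 1 0 f
  have hF : ∀ t ∈ Ico (0 : ℝ) 1, F t = f t := fun t ht => by
    exact AddCircle.liftIco_coe_apply (by rwa [zero_add])
  have hex : ∀ x : AddCircle (1 : ℝ), ∃ t ∈ Ico (0 : ℝ) 1, (t : AddCircle (1 : ℝ)) = x := by
    intro x
    have h1 := AddCircle.coe_image_Ico_eq (1 : ℝ) 0
    rw [zero_add] at h1
    exact h1.symm.subset (mem_univ x)
  have hcont : Continuous F :=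
    AddCircle.liftIco_continuous (by rwa [zero_add]) hf.continuousOn
  have hFinj : Function.Injective F := by
    intro x y hxy
    obtain ⟨s, hs, rfl⟩ := hex x
    obtain ⟨t, ht, rfl⟩ := hex y
    rw [hF s hs, hF t ht] at hxy
    rw [hinj hs ht hxy]
  have hrange : range F = f '' Ico 0 1 := by
    ext y
    constructor
    · rintro ⟨x, rfl⟩
      obtain ⟨s, hs, rfl⟩ := hex x
      exact ⟨s, hs, (hF s hs).symm⟩
    · rintro ⟨s, hs, rfl⟩
      exact ⟨s, hF s hs⟩
  have hemb := (hcont.isClosedEmbedding hFinj).isEmbedding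
  exact ⟨((Homeomorph.setCongr hrange).symm.trans hemb.toHomeomorph.symm).trans
    (AddCircle.homeomorphCircle one_ne_zero)⟩

end Concat

namespace RootedArcs

variable {Y : Type*} [TopologicalSpace Y] {q : Y} {Z : Set Y} {W : Type*}

/-- The vertices, the root being `none`. -/
def vertex (D : RootedArcs Y q Z W) (a : Option W) : Y :=
  a.elim q fun w => D.path w 1

theorem root_mem (D : RootedArcs Y q Z W) : q ∈ Z :=
  D.carrier_eq.subset (mem_insert _ _)

theorem path_mem (D : RootedArcs Y q Z W) (w : W) {t : ℝ} (ht : t ∈ Ioc (0 : ℝ) 1) :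
    D.path w t ∈ Z :=
  D.carrier_eq.subset (mem_insert_of_mem _ (mem_iUnion.2 ⟨w, t, ht, rfl⟩))

/-- The tree consisting of a root only. -/
def point (q : Y) : RootedArcs Y q {q} PEmpty.{1} where
  par := PEmpty.elim
  dep := PEmpty.elim
  path := PEmpty.elim
  dep_lt := fun w => w.elim
  continuous_path := fun w => w.elim
  path_zero := fun w => w.elim
  path_inj := fun w => w.elim
  path_ne := fun w => w.elim
  carrier_eq := by simp

/-- Attach an arc at a vertex. -/
def attach (D : RootedArcs Y q Z W) (a : Option W) {γ : ℝ → Y} (hγ : Continuous γ)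
    (h₀ : γ 0 = D.vertex a) (hinj : InjOn γ (Ioc 0 1)) (hZ : ∀ t ∈ Ioc (0 : ℝ) 1, γ t ∉ Z) :
    RootedArcs Y q (Z ∪ γ '' Ioc 0 1) (Option W) where
  par := fun x => x.elim (a.map some) fun w => (D.par w).map some
  dep := fun x => x.elim (a.elim 0 fun w => D.dep w + 1) D.dep
  path := fun x => x.elim γ D.path
  dep_lt := by
    rintro (_ | w) u hu
    · obtain ⟨v, hv, rfl⟩ := Option.map_eq_some_iff.1 hu
      simp [hv]
    · obtain ⟨v, hv, rfl⟩ := Option.map_eq_some_iff.1 hu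
      exact D.dep_lt w v hv
  continuous_path := by
    rintro (_ | w)
    exacts [hγ, D.continuous_path w]
  path_zero := by
    rintro (_ | w)
    · rw [Option.elim_none, h₀]
      cases a <;> rfl
    · rw [Option.elim_some, D.path_zero, Option.elim_some]
      cases D.par w <;> rfl
  path_inj := by
    rintro (_ | w) (_ | w') s t hs ht h
    · exact ⟨rfl, hinj hs ht h⟩
    · have h : γ s = D.path w' t := h
      exact absurd (h ▸ D.path_mem w' ht) (hZ s hs)
    · have h : D.path w s = γ t := h
      exact absurd (h ▸ D.path_mem w hs) (hZ t ht)
    · obtain ⟨h1, h2⟩ := D.path_inj w w' s t hs ht h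
      exact ⟨congrArg some h1, h2⟩
  path_ne := by
    rintro (_ | w) s hs h
    · have h : γ s = q := h
      exact hZ s hs (h ▸ D.root_mem)
    · exact D.path_ne w s hs h
  carrier_eq := by
    rw [iUnion_option]
    conv_rhs => rw [← D.carrier_eq]
    rw [insert_union, union_comm]
    rfl

open Classical in
/-- Suppress a vertex `w` having exactly one child `u`. -/
noncomputable def suppress (D : RootedArcs Y q univ W) {w u : W} (hu : D.par u = some w)
    (huniq : ∀ x, D.par x = some w → x = u) : RootedArcs Y q univ {x // x ≠ w} where
  par := fun x => (if x.1 = u then D.par w else D.par x).pmap Subtype.mk (by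
    rintro v hv rfl
    split_ifs at hv with h
    · exact lt_irrefl _ (D.dep_lt _ _ hv)
    · exact h (huniq _ hv))
  dep := fun x => D.dep x
  path := fun x => if x.1 = u then concat (D.path w) (D.path u) else D.path x
  dep_lt := by
    rintro ⟨x, hx⟩ ⟨y, hy⟩ h
    have h := congrArg (Option.map Subtype.val) h
    rw [Option.map_pmap, Option.pmap_eq_map, Option.map_id', Option.map_some] at h
    change (if x = u then D.par w else D.par x) = some y at h
    by_cases hxu : x = u
    · subst hxu
      rw [if_pos rfl] at h
      exact (D.dep_lt _ _ h).trans (D.dep_lt _ _ hu)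
    · rw [if_neg hxu] at h
      exact D.dep_lt _ _ h
  continuous_path := by
    intro x
    split_ifs
    · refine continuous_concat (D.continuous_path _) (D.continuous_path _) ?_
      rw [D.path_zero u, hu, Option.elim_some]
    · exact D.continuous_path _
  path_zero := by
    have hone : ∀ x : {x // x ≠ w}, (if x.1 = u then concat (D.path w) (D.path u) else D.path x) 1 =
        D.path x 1 := by
      intro x
      split_ifs with h
      · rw [concat_one, h]
      · rfl
    intro x
    simp only [hone]
    rw [Option.elim_pmap]
    change _ = Option.pelim _ q fun v _ => D.path v 1
    rw [Option.pelim_eq_elim]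
    split_ifs with h
    · rw [concat_zero, D.path_zero]
    · rw [D.path_zero]
  path_inj := by
    have hlow : ∀ t ∈ Ioc (0 : ℝ) 1, t ≤ 1 / 2 → 2 * t ∈ Ioc (0 : ℝ) 1 := fun t ht h =>
      ⟨by linarith [ht.1], by linarith⟩
    have hhigh : ∀ t ∈ Ioc (0 : ℝ) 1, ¬ t ≤ 1 / 2 → 2 * t - 1 ∈ Ioc (0 : ℝ) 1 := fun t ht h =>
      ⟨by linarith [not_le.1 h], by linarith [ht.2]⟩
    have hmix : ∀ y : {x // x ≠ w}, y.1 ≠ u → ∀ s ∈ Ioc (0 : ℝ) 1, ∀ t ∈ Ioc (0 : ℝ) 1,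
        concat (D.path w) (D.path u) s ≠ D.path y t := by
      intro y hy s hs t ht h
      rw [concat] at h
      split_ifs at h with h1
      · exact y.2 (D.path_inj _ _ _ _ (hlow s hs h1) ht h).1.symm
      · exact hy (D.path_inj _ _ _ _ (hhigh s hs h1) ht h).1.symm
    intro x y s t hs ht h
    split_ifs at h with hx hy hy
    · refine ⟨Subtype.ext (hx.trans hy.symm), ?_⟩
      simp only [concat] at h
      split_ifs at h with h1 h2 h2
      · linarith [(D.path_inj _ _ _ _ (hlow s hs h1) (hlow t ht h2) h).2]
      · have := (D.path_inj _ _ _ _ (hlow s hs h1) (hhigh t ht h2) h).1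
        exact absurd (hx.trans this.symm) x.2
      · have := (D.path_inj _ _ _ _ (hhigh s hs h1) (hlow t ht h2) h).1
        exact absurd (hx.trans this) x.2
      · linarith [(D.path_inj _ _ _ _ (hhigh s hs h1) (hhigh t ht h2) h).2]
    · exact absurd h (hmix y hy s hs t ht)
    · exact absurd h.symm (hmix x hx t ht s hs)
    · obtain ⟨h1, h2⟩ := D.path_inj _ _ _ _ hs ht h
      exact ⟨Subtype.ext h1, h2⟩
  path_ne := by
    intro x s hs
    split_ifs
    · simp only [concat]
      split_ifs with h
      · exact D.path_ne _ _ ⟨by linarith [hs.1], by linarith⟩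
      · exact D.path_ne _ _ ⟨by linarith [not_le.1 h], by linarith [hs.2]⟩
    · exact D.path_ne _ _ hs
  carrier_eq := by
    have hwu : u ≠ w := by rintro rfl; exact lt_irrefl _ (D.dep_lt _ _ hu)
    refine eq_univ_of_forall fun y => ?_
    rcases D.eq_root_or_exists y with rfl | ⟨x, t, ht, rfl⟩
    · exact mem_insert _ _
    · refine mem_insert_of_mem _ (mem_iUnion.2 ?_)
      by_cases hx : x = w
      · subst hx
        refine ⟨⟨u, hwu⟩, t / 2, ⟨by linarith [ht.1], by linarith [ht.2]⟩, ?_⟩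
        rw [if_pos rfl, concat, if_pos (by linarith [ht.2]), mul_div_cancel₀ _ two_ne_zero]
      · by_cases hxu : x = u
        · subst hxu
          refine ⟨⟨x, hx⟩, (t + 1) / 2, ⟨by linarith [ht.1], by linarith [ht.2]⟩, ?_⟩
          rw [if_pos rfl, concat, if_neg (by linarith [ht.1]), mul_div_cancel₀ _ two_ne_zero,
            add_sub_cancel_right]
        · exact ⟨⟨x, hx⟩, t, ht, by rw [if_neg hxu]⟩

theorem exists_reduced {Y : Type*} [TopologicalSpace Y] {q : Y} {W : Type} [Finite W]
    (D : RootedArcs Y q univ W) :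
    ∃ (W' : Type) (_ : Finite W') (D' : RootedArcs Y q univ W'),
      ∀ w, {x | D'.par x = some w}.ncard ≠ 1 := by
  induction h : Nat.card W using Nat.strong_induction_on generalizing W with
  | _ n ih =>
    by_cases hred : ∀ w, {x | D.par x = some w}.ncard ≠ 1
    · exact ⟨W, ‹_›, D, hred⟩
    · push Not at hred
      obtain ⟨w, hw⟩ := hred
      obtain ⟨u, hu⟩ := ncard_eq_one.1 hw
      refine ih _ ?_ (D.suppress (w := w) (u := u) (hu.superset rfl) fun x hx => hu.subset hx) rfl
      rw [← h]
      exact Finite.card_subtype_lt (x := w) (by simp)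

end RootedArcs

section ArcJoined

variable {Y : Type*} [TopologicalSpace Y] {Z Z' : Set Y} {a b c : Y}

/-- The points `a` and `b` are the ends of an arc in `Z`. -/
def ArcJoined (Z : Set Y) (a b : Y) : Prop :=
  ∃ α : ℝ → Y, Continuous α ∧ InjOn α (Icc 0 1) ∧ MapsTo α (Icc 0 1) Z ∧ α 0 = a ∧ α 1 = b

theorem ArcJoined.symm (h : ArcJoined Z a b) : ArcJoined Z b a := by
  obtain ⟨α, hα, hinj, hZ, h0, h1⟩ := h
  have hmem : ∀ t ∈ Icc (0 : ℝ) 1, 1 - t ∈ Icc (0 : ℝ) 1 := fun t ht =>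
    ⟨by linarith [ht.2], by linarith [ht.1]⟩
  refine ⟨fun t => α (1 - t), by fun_prop, fun s hs t ht hst => ?_, fun t ht => hZ (hmem t ht),
    by simpa using h1, by simpa using h0⟩
  linarith [hinj (hmem s hs) (hmem t ht) hst]

theorem ArcJoined.mono (h : ArcJoined Z a b) (hZ : Z ⊆ Z') : ArcJoined Z' a b := by
  obtain ⟨α, hα, hinj, hm, h0, h1⟩ := h
  exact ⟨α, hα, hinj, hm.mono_right hZ, h0, h1⟩

theorem ArcJoined.trans (h : ArcJoined Z a b) (h' : ArcJoined Z' b c) (hZ : Z ∩ Z' ⊆ {b}) :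
    ArcJoined (Z ∪ Z') a c := by
  obtain ⟨α, hα, hinj, hm, h0, h1⟩ := h
  obtain ⟨β, hβ, hinj', hm', h0', h1'⟩ := h'
  refine ⟨concat α β, continuous_concat hα hβ (h1.trans h0'.symm), ?_,
    concat_mem (hm.mono_right subset_union_left) (hm'.mono_right subset_union_right),
    (concat_zero α β).trans h0, (concat_one α β).trans h1'⟩
  refine InjOn.mono (fun t ht => ?_)
    (injOn_concat (S := Icc 0 1) hinj hinj' fun s hs t ht hst => ?_)
  · exact ⟨ht.1, fun h => ⟨by linarith, by linarith [ht.2]⟩⟩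
  have hb : α s = b := hZ ⟨hm hs, hst ▸ hm' ht⟩
  exact ⟨hinj hs ⟨zero_le_one, le_rfl⟩ (hb.trans h1.symm),
    hinj' ht ⟨le_rfl, zero_le_one⟩ ((hst.symm.trans hb).trans h0'.symm)⟩

theorem arcJoined_image {γ : ℝ → Y} (hγ : Continuous γ) (hinj : InjOn γ (Icc 0 1)) {s t : ℝ}
    (hs : 0 ≤ s) (hst : s < t) (ht : t ≤ 1) : ArcJoined (γ '' Icc s t) (γ s) (γ t) := by
  have hmem : ∀ r ∈ Icc (0 : ℝ) 1, s + r * (t - s) ∈ Icc s t := fun r hr =>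
    ⟨by nlinarith [hr.1], by nlinarith [hr.2]⟩
  refine ⟨fun r => γ (s + r * (t - s)), by fun_prop, fun r hr r' hr' h => ?_,
    fun r hr => mem_image_of_mem _ (hmem r hr), by simp, by simp⟩
  have hsub : Icc s t ⊆ Icc 0 1 := Icc_subset_Icc hs ht
  have := hinj (hsub (hmem r hr)) (hsub (hmem r' hr')) h
  have h2 : r * (t - s) = r' * (t - s) := by linarith
  exact mul_right_cancel₀ (by linarith : t - s ≠ 0) h2

/-- A set whose points are joined by arcs keeps this property when an arc is attached. -/
theorem arcJoined_union_image (hZ : ∀ a ∈ Z, ∀ b ∈ Z, a ≠ b → ArcJoined Z a b) {γ : ℝ → Y}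
    (hγ : Continuous γ) (hinj : InjOn γ (Icc 0 1)) (h₀ : γ 0 ∈ Z)
    (h : ∀ t ∈ Ioc (0 : ℝ) 1, γ t ∉ Z) :
    ∀ a ∈ Z ∪ γ '' Ioc 0 1, ∀ b ∈ Z ∪ γ '' Ioc 0 1, a ≠ b → ArcJoined (Z ∪ γ '' Ioc 0 1) a b := by
  have himg : ∀ t ∈ Icc (0 : ℝ) 1, γ t ∈ Z ∪ γ '' Ioc 0 1 := by
    intro t ht
    rcases ht.1.eq_or_lt with rfl | h'
    · exact Or.inl h₀
    · exact Or.inr ⟨t, ⟨h', ht.2⟩, rfl⟩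
  have hseg : ∀ s t, 0 ≤ s → s < t → t ≤ 1 → ArcJoined (Z ∪ γ '' Ioc 0 1) (γ s) (γ t) := by
    intro s t hs hst ht
    refine (arcJoined_image hγ hinj hs hst ht).mono ?_
    rintro _ ⟨r, hr, rfl⟩
    exact himg r (Icc_subset_Icc hs ht hr)
  have hmix : ∀ a ∈ Z, ∀ t ∈ Ioc (0 : ℝ) 1, ArcJoined (Z ∪ γ '' Ioc 0 1) a (γ t) := by
    intro a ha t ht
    by_cases ha0 : a = γ 0
    · rw [ha0]
      exact hseg 0 t le_rfl ht.1 ht.2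
    · have hj := (hZ a ha _ h₀ ha0).trans (arcJoined_image hγ hinj le_rfl ht.1 ht.2) (by
        rintro _ ⟨hr, r, hr', rfl⟩
        rcases hr'.1.eq_or_lt with rfl | h'
        · rfl
        · exact absurd hr (h r ⟨h', hr'.2.trans ht.2⟩))
      refine hj.mono (union_subset subset_union_left ?_)
      rintro _ ⟨r, hr, rfl⟩
      exact himg r ⟨hr.1, hr.2.trans ht.2⟩
  rintro a (ha | ⟨s, hs, rfl⟩) b (hb | ⟨t, ht, rfl⟩) hab
  · exact (hZ a ha b hb hab).mono subset_union_left
  · exact hmix a ha t ht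
  · exact (hmix b hb s hs).symm
  · rcases lt_trichotomy s t with hst | rfl | hst
    · exact hseg s t hs.1.le hst ht.2
    · exact absurd rfl hab
    · exact (hseg t s ht.1.le hst hs.2).symm

end ArcJoined

/-- A family of arcs covering a space, which may meet only in their end points. -/
structure IsArcCover {Y ι : Type*} [TopologicalSpace Y] (γ : ι → ℝ → Y) : Prop where
  continuous : ∀ i, Continuous (γ i)
  injOn : ∀ i, InjOn (γ i) (Icc 0 1)
  eq_of_ne : ∀ i j, i ≠ j → ∀ s ∈ Icc (0 : ℝ) 1, ∀ t ∈ Icc (0 : ℝ) 1, γ i s = γ j t →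
    (s = 0 ∨ s = 1) ∧ (t = 0 ∨ t = 1)
  exists_eq : ∀ y, ∃ i, ∃ t ∈ Icc (0 : ℝ) 1, γ i t = y

namespace IsArcCover

variable {Y ι : Type*} [TopologicalSpace Y] {γ : ι → ℝ → Y} {q : Y}

/-- The root `q` and the arcs indexed by `J` form a tree `Z`. -/
def IsGrown (γ : ι → ℝ → Y) (q : Y) (J : Set ι) (Z : Set Y) : Prop :=
  Z = insert q (⋃ i ∈ J, γ i '' Icc 0 1) ∧ (∀ a ∈ Z, ∀ b ∈ Z, a ≠ b → ArcJoined Z a b) ∧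
    ∃ (W : Type) (_ : Finite W) (D : RootedArcs Y q Z W),
      ∀ i ∈ J, ∀ e : ℝ, e = 0 ∨ e = 1 → ∃ a, γ i e = D.vertex a

theorem isGrown_empty : IsGrown γ q ∅ {q} := by
  refine ⟨by simp, ?_, PEmpty, inferInstance, RootedArcs.point q, fun i hi => hi.elim⟩
  rintro a rfl b rfl h
  exact absurd rfl h

/-- Attaching an arc which has an end in the tree, in a space without simple closed curves. -/
theorem IsGrown.insert_of_mem [T2Space Y] (hY : ∀ S : Set Y, ¬ IsSimpleClosedCurve S) {J : Set ι}
    {Z : Set Y} (h : IsGrown γ q J Z) {k : ι} {δ : ℝ → Y} (hδ : Continuous δ)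
    (hinj : InjOn δ (Icc 0 1)) (himg : δ '' Icc 0 1 = γ k '' Icc 0 1)
    (hend : (γ k 0 = δ 0 ∧ γ k 1 = δ 1) ∨ (γ k 0 = δ 1 ∧ γ k 1 = δ 0)) (h₀ : δ 0 ∈ Z)
    (hmeet : ∀ t ∈ Icc (0 : ℝ) 1, δ t ∈ Z → (t = 0 ∨ t = 1) ∧
      (δ t = q ∨ ∃ i ∈ J, ∃ e : ℝ, (e = 0 ∨ e = 1) ∧ δ t = γ i e)) :
    IsGrown γ q (insert k J) (Z ∪ δ '' Ioc 0 1) := by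
  obtain ⟨hZ, hjoin, W, hW, D, hD⟩ := h
  have hmem0 : (0 : ℝ) ∈ Icc (0 : ℝ) 1 := ⟨le_rfl, zero_le_one⟩
  have hmem1 : (1 : ℝ) ∈ Icc (0 : ℝ) 1 := ⟨zero_le_one, le_rfl⟩
  have h1 : δ 1 ∉ Z := by
    intro h1
    have hne : δ 1 ≠ δ 0 := fun h => one_ne_zero (hinj hmem1 hmem0 h)
    obtain ⟨α, hα, hαinj, hαZ, hα0, hα1⟩ := hjoin _ h1 _ h₀ hne
    refine hY _ (isSimpleClosedCurve_image (continuous_concat hδ hα hα0.symm) ?_ ?_)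
    · refine InjOn.mono (fun t ht => ?_) (injOn_concat (S := Ico 0 1) hinj
        (hαinj.mono Ico_subset_Icc_self) fun s hs t ht hst => ?_)
      · exact ⟨ht.1, fun h => ⟨by linarith, by linarith [ht.2]⟩⟩
      have ht' := Ico_subset_Icc_self ht
      rcases (hmeet s hs (hst ▸ hαZ ht')).1 with rfl | rfl
      · exact absurd (hαinj hmem1 ht' (hα1.trans hst)) ht.2.ne'
      · exact ⟨rfl, (hαinj hmem0 ht' (hα0.trans hst)).symm⟩
    · rw [concat_zero, concat_one, hα1]
  have hdisj : ∀ t ∈ Ioc (0 : ℝ) 1, δ t ∉ Z := by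
    intro t ht htZ
    rcases (hmeet t (Ioc_subset_Icc_self ht) htZ).1 with rfl | rfl
    · exact lt_irrefl _ ht.1
    · exact h1 htZ
  obtain ⟨a, ha⟩ : ∃ a, δ 0 = D.vertex a := by
    rcases (hmeet 0 hmem0 h₀).2 with h | ⟨i, hi, e, he, h⟩
    · exact ⟨none, h⟩
    · rw [h]
      exact hD i hi e he
  have hZ' : Z ∪ δ '' Ioc 0 1 = insert q (⋃ i ∈ insert k J, γ i '' Icc 0 1) := by
    have himg' : γ k '' Icc 0 1 = insert (δ 0) (δ '' Ioc 0 1) := by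
      rw [← himg, ← Ioc_insert_left zero_le_one, image_insert_eq]
    rw [biUnion_insert, ← union_insert, ← hZ, himg', insert_union, union_comm]
    exact (insert_eq_of_mem (mem_union_right _ h₀)).symm
  refine ⟨hZ', arcJoined_union_image hjoin hδ hinj h₀ hdisj, Option W, inferInstance,
    D.attach a hδ ha (hinj.mono Ioc_subset_Icc_self) hdisj, ?_⟩
  have hold : ∀ b, ∃ b', D.vertex b =
      (D.attach a hδ ha (hinj.mono Ioc_subset_Icc_self) hdisj).vertex b' := by
    rintro (_ | w)
    exacts [⟨none, rfl⟩, ⟨some (some w), rfl⟩]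
  have hδ0 := ha ▸ hold a
  have hδ1 : ∃ b', δ 1 =
      (D.attach a hδ ha (hinj.mono Ioc_subset_Icc_self) hdisj).vertex b' := ⟨some none, rfl⟩
  rintro i (rfl | hi) e he
  · rcases he with rfl | rfl <;> rcases hend with h | h
    · rwa [h.1]
    · rwa [h.1]
    · rwa [h.2]
    · rwa [h.2]
  · obtain ⟨b, hb⟩ := hD i hi e he
    rw [hb]
    exact hold b

theorem exists_isGrown_insert [T2Space Y] [PreconnectedSpace Y] [Finite ι] (hγ : IsArcCover γ)
    (hY : ∀ S : Set Y, ¬ IsSimpleClosedCurve S) (hq : ∃ i, γ i 0 = q ∨ γ i 1 = q) {J : Set ι}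
    {Z : Set Y} (h : IsGrown γ q J Z) (hJ : J ≠ univ) :
    ∃ k ∉ J, ∃ Z', IsGrown γ q (insert k J) Z' := by
  have hmem0 : (0 : ℝ) ∈ Icc (0 : ℝ) 1 := ⟨le_rfl, zero_le_one⟩
  have hmem1 : (1 : ℝ) ∈ Icc (0 : ℝ) 1 := ⟨zero_le_one, le_rfl⟩
  have hZ := h.1
  have hclosed : ∀ K : Set ι, IsClosed (⋃ i ∈ K, γ i '' Icc 0 1) := fun K =>
    (toFinite K).isClosed_biUnion fun i _ => (isCompact_Icc.image (hγ.continuous i)).isClosed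
  obtain ⟨k, hk, t₀, ht₀, hkZ⟩ : ∃ k ∉ J, ∃ t ∈ Icc (0 : ℝ) 1, γ k t ∈ Z := by
    by_contra! hno
    have hcompl : Zᶜ = ⋃ i ∈ Jᶜ, γ i '' Icc 0 1 := by
      ext y
      constructor
      · intro hy
        obtain ⟨i, t, ht, rfl⟩ := hγ.exists_eq y
        refine mem_biUnion (fun hi => hy ?_) ⟨t, ht, rfl⟩
        rw [hZ]
        exact mem_insert_of_mem _ (mem_biUnion hi ⟨t, ht, rfl⟩)
      · intro hy
        obtain ⟨i, hi, t, ht, rfl⟩ := mem_iUnion₂.1 hy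
        exact hno i hi t ht
    have hclopen : IsClopen Z := by
      refine ⟨?_, isClosed_compl_iff.1 (hcompl ▸ hclosed Jᶜ)⟩
      rw [hZ, insert_eq]
      exact isClosed_singleton.union (hclosed J)
    obtain ⟨k, hk⟩ := (ne_univ_iff_exists_notMem J).1 hJ
    refine hno k hk 0 hmem0 ?_
    rw [hclopen.eq_univ ⟨q, by rw [hZ]; exact mem_insert _ _⟩]
    trivial
  have hmeet : ∀ t ∈ Icc (0 : ℝ) 1, γ k t ∈ Z → (t = 0 ∨ t = 1) ∧
      (γ k t = q ∨ ∃ i ∈ J, ∃ e : ℝ, (e = 0 ∨ e = 1) ∧ γ k t = γ i e) := by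
    intro t ht htZ
    rw [hZ] at htZ
    rcases htZ with htq | htZ
    · refine ⟨?_, Or.inl htq⟩
      obtain ⟨i, e, he, heI, hie⟩ : ∃ i, ∃ e : ℝ, (e = 0 ∨ e = 1) ∧ e ∈ Icc (0 : ℝ) 1 ∧
          γ i e = q := by
        obtain ⟨i, h | h⟩ := hq
        · exact ⟨i, 0, Or.inl rfl, hmem0, h⟩
        · exact ⟨i, 1, Or.inr rfl, hmem1, h⟩
      by_cases hki : k = i
      · subst hki
        rwa [hγ.injOn k ht heI (htq.trans hie.symm)]
      · exact (hγ.eq_of_ne k i hki t ht e heI (htq.trans hie.symm)).1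
    · obtain ⟨i, hi, s, hs, his⟩ := mem_iUnion₂.1 htZ
      have hki : k ≠ i := by rintro rfl; exact hk hi
      have h2 := hγ.eq_of_ne k i hki t ht s hs his.symm
      exact ⟨h2.1, Or.inr ⟨i, hi, s, h2.2, his.symm⟩⟩
  refine ⟨k, hk, ?_⟩
  rcases (hmeet t₀ ht₀ hkZ).1 with rfl | rfl
  · exact ⟨_, h.insert_of_mem hY (hγ.continuous k) (hγ.injOn k) rfl (Or.inl ⟨rfl, rfl⟩) hkZ hmeet⟩
  · have hrev : ∀ t ∈ Icc (0 : ℝ) 1, 1 - t ∈ Icc (0 : ℝ) 1 := fun t ht =>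
      ⟨by linarith [ht.2], by linarith [ht.1]⟩
    refine ⟨_, h.insert_of_mem hY (δ := fun t => γ k (1 - t)) (k := k)
      ((hγ.continuous k).comp (by fun_prop)) (fun s hs t ht hst => ?_) ?_ (Or.inr ?_) ?_ ?_⟩
    · linarith [hγ.injOn k (hrev s hs) (hrev t ht) hst]
    · refine Subset.antisymm ?_ ?_
      · rintro _ ⟨t, ht, rfl⟩
        exact ⟨1 - t, hrev t ht, rfl⟩
      · rintro _ ⟨t, ht, rfl⟩
        exact ⟨1 - t, hrev t ht, by simp⟩
    · simp
    · simpa using hkZ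
    · intro t ht htZ
      obtain ⟨h1, h2⟩ := hmeet _ (hrev t ht) htZ
      exact ⟨h1.symm.imp (fun h => by linarith) fun h => by linarith, h2⟩

theorem exists_rootedArcs [T2Space Y] [PreconnectedSpace Y] [Finite ι] (hγ : IsArcCover γ)
    (hY : ∀ S : Set Y, ¬ IsSimpleClosedCurve S) (hq : ∃ i, γ i 0 = q ∨ γ i 1 = q) :
    ∃ (W : Type) (_ : Finite W), Nonempty (RootedArcs Y q univ W) := by
  have key : ∀ n, ∀ J Z, Jᶜ.ncard = n → IsGrown γ q J Z → ∃ Z', IsGrown γ q univ Z' := by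
    intro n
    induction n with
    | zero =>
      intro J Z hn h
      rw [ncard_eq_zero, compl_empty_iff] at hn
      exact ⟨Z, hn ▸ h⟩
    | succ n ih =>
      intro J Z hn h
      have hJ : J ≠ univ := by
        rintro rfl
        simp at hn
      obtain ⟨k, hk, Z', hZ'⟩ := hγ.exists_isGrown_insert hY hq h hJ
      refine ih _ _ ?_ hZ'
      have : (insert k J)ᶜ = Jᶜ \ {k} := by
        ext x
        simp [not_or, and_comm]
      rw [this, ncard_sdiff_singleton_of_mem (show k ∈ Jᶜ from hk), hn, Nat.add_sub_cancel]
  obtain ⟨Z, hZ, -, W, hW, D, -⟩ := key _ ∅ {q} rfl isGrown_empty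
  have huniv : Z = univ := by
    refine eq_univ_of_forall fun y => ?_
    obtain ⟨i, t, ht, rfl⟩ := hγ.exists_eq y
    rw [hZ]
    exact mem_insert_of_mem _ (mem_biUnion (mem_univ i) ⟨t, ht, rfl⟩)
  subst huniv
  exact ⟨W, hW, ⟨D⟩⟩

end IsArcCover

section Arc

variable {Y : Type u} [TopologicalSpace Y] {A : Set Y}

theorem eq_zero_or_one_of_isArcEndpoint (h : Icc (0 : ℝ) 1 ≃ₜ A) {t : Icc (0 : ℝ) 1}
    (ht : IsArcEndpoint A (h t : Y)) : t.1 = 0 ∨ t.1 = 1 := by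
  obtain ⟨b, h', h0, -⟩ := ht
  by_contra! hne
  let φ : Icc (0 : ℝ) 1 ≃ₜ Icc (0 : ℝ) 1 := h'.trans h.symm
  have hφ : φ ⟨0, by norm_num⟩ = t := by
    change h.symm (h' _) = t
    rw [Homeomorph.symm_apply_eq]
    exact Subtype.ext h0
  let ψ : ℝ → ℝ := fun s => φ (projIcc 0 1 zero_le_one s)
  have hψ : Continuous ψ := by fun_prop
  have hpre := isPreconnected_Ioc.image (s := Ioc (0 : ℝ) 1) ψ hψ.continuousOn
  have hmem : ∀ r : Icc (0 : ℝ) 1, r ≠ t → r.1 ∈ ψ '' Ioc 0 1 := by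
    intro r hr
    have hs : φ.symm r ≠ ⟨0, by norm_num⟩ := by
      intro h
      rw [Homeomorph.symm_apply_eq, hφ] at h
      exact hr h
    refine ⟨φ.symm r, ⟨lt_of_le_of_ne (φ.symm r).2.1 fun h => hs (Subtype.ext h.symm),
      (φ.symm r).2.2⟩, ?_⟩
    simp [ψ]
  have h1 := hmem ⟨0, by norm_num⟩ fun h => hne.1 (congrArg Subtype.val h).symm
  have h2 := hmem ⟨1, by norm_num⟩ fun h => hne.2 (congrArg Subtype.val h).symm
  obtain ⟨s, hs, hst⟩ := hpre.Icc_subset h1 h2 t.2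
  have h3 : φ (projIcc 0 1 zero_le_one s) = φ ⟨0, by norm_num⟩ := by
    rw [hφ]
    exact Subtype.ext hst
  have h4 := congrArg Subtype.val (φ.injective h3)
  rw [projIcc_of_mem _ (Ioc_subset_Icc_self hs)] at h4
  exact hs.1.ne' h4

/-- The parametrization of an arc by the real line, constant outside of `[0, 1]`. -/
noncomputable def arcPath (h : Icc (0 : ℝ) 1 ≃ₜ A) (t : ℝ) : Y :=
  h (projIcc 0 1 zero_le_one t)

theorem continuous_arcPath (h : Icc (0 : ℝ) 1 ≃ₜ A) : Continuous (arcPath h) := by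
  unfold arcPath
  fun_prop

theorem arcPath_of_mem (h : Icc (0 : ℝ) 1 ≃ₜ A) {t : ℝ} (ht : t ∈ Icc (0 : ℝ) 1) :
    arcPath h t = h ⟨t, ht⟩ := by
  rw [arcPath, projIcc_of_mem]

theorem injOn_arcPath (h : Icc (0 : ℝ) 1 ≃ₜ A) : InjOn (arcPath h) (Icc 0 1) := by
  intro s hs t ht hst
  rw [arcPath_of_mem h hs, arcPath_of_mem h ht] at hst
  exact congrArg Subtype.val (h.injective (Subtype.ext hst))

theorem arcPath_mem (h : Icc (0 : ℝ) 1 ≃ₜ A) (t : ℝ) : arcPath h t ∈ A :=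
  (h _).2

theorem exists_arcPath_eq (h : Icc (0 : ℝ) 1 ≃ₜ A) {y : Y} (hy : y ∈ A) :
    ∃ t ∈ Icc (0 : ℝ) 1, arcPath h t = y := by
  refine ⟨h.symm ⟨y, hy⟩, (h.symm ⟨y, hy⟩).2, ?_⟩
  rw [arcPath_of_mem h (h.symm ⟨y, hy⟩).2]
  simp

theorem isArcCover_arcPath {𝒜 : Set (Set Y)} (hcover : ⋃₀ 𝒜 = univ)
    (hmeet : ∀ A ∈ 𝒜, ∀ B ∈ 𝒜, A ≠ B → ∀ x ∈ A ∩ B, IsArcEndpoint A x ∧ IsArcEndpoint B x)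
    (h : ∀ A : 𝒜, Icc (0 : ℝ) 1 ≃ₜ (A : Set Y)) : IsArcCover fun A : 𝒜 => arcPath (h A) where
  continuous A := continuous_arcPath (h A)
  injOn A := injOn_arcPath (h A)
  eq_of_ne := by
    intro A B hAB s hs t ht hst
    obtain ⟨h1, h2⟩ := hmeet A A.2 B B.2 (fun h => hAB (Subtype.ext h)) _
      ⟨arcPath_mem (h A) s, hst ▸ arcPath_mem (h B) t⟩
    rw [hst, arcPath_of_mem _ ht] at h2
    rw [arcPath_of_mem _ hs] at h1
    exact ⟨eq_zero_or_one_of_isArcEndpoint _ h1, eq_zero_or_one_of_isArcEndpoint _ h2⟩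
  exists_eq := by
    intro y
    obtain ⟨A, hA, hy⟩ := hcover.superset (mem_univ y)
    exact ⟨⟨A, hA⟩, exists_arcPath_eq (h ⟨A, hA⟩) hy⟩

end Arc

namespace IsArcCover

variable {Y ι : Type*} [TopologicalSpace Y] {γ : ι → ℝ → Y}

open Classical in
/-- Subdivide the arc `i` at the parameter `c`. -/
theorem subdivide (hγ : IsArcCover γ) (i : ι) {c : ℝ} (hc : c ∈ Ioo (0 : ℝ) 1) :
    IsArcCover fun k : Option ι => k.elim (fun t => γ i (c + t * (1 - c)))
      fun j => if j = i then fun t => γ i (t * c) else γ j := by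
  have hc' : 0 < 1 - c := by linarith [hc.2]
  have hlow : ∀ t ∈ Icc (0 : ℝ) 1, t * c ∈ Icc (0 : ℝ) 1 := fun t ht =>
    ⟨mul_nonneg ht.1 hc.1.le, mul_le_one₀ ht.2 hc.1.le hc.2.le⟩
  have hhigh : ∀ t ∈ Icc (0 : ℝ) 1, c + t * (1 - c) ∈ Icc (0 : ℝ) 1 := fun t ht =>
    ⟨by nlinarith [ht.1, hc.1], by nlinarith [ht.2, hc.1]⟩
  have hlowE : ∀ t ∈ Icc (0 : ℝ) 1, t * c = 0 ∨ t * c = 1 → t = 0 ∨ t = 1 := by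
    rintro t ht (h | h)
    · exact Or.inl ((mul_eq_zero.1 h).resolve_right hc.1.ne')
    · exact absurd h (by nlinarith [ht.2, hc.1, hc.2])
  have hhighE : ∀ t ∈ Icc (0 : ℝ) 1, c + t * (1 - c) = 0 ∨ c + t * (1 - c) = 1 →
      t = 0 ∨ t = 1 := by
    rintro t ht (h | h)
    · exact absurd h (by nlinarith [ht.1, hc.1])
    · exact Or.inr (mul_right_cancel₀ hc'.ne' (by linarith))
  have hmix : ∀ s ∈ Icc (0 : ℝ) 1, ∀ t ∈ Icc (0 : ℝ) 1, γ i (c + s * (1 - c)) = γ i (t * c) →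
      s = 0 ∧ t = 1 := by
    intro s hs t ht h
    have h1 := hγ.injOn i (hhigh s hs) (hlow t ht) h
    have h2 : t * c ≤ c := by nlinarith [ht.2, hc.1]
    have h3 : 0 ≤ s * (1 - c) := mul_nonneg hs.1 hc'.le
    exact ⟨(mul_eq_zero.1 (by linarith : s * (1 - c) = 0)).resolve_right hc'.ne',
      mul_right_cancel₀ hc.1.ne' (by linarith : t * c = 1 * c)⟩
  refine ⟨?_, ?_, ?_, ?_⟩
  · rintro (_ | j)
    · exact (hγ.continuous i).comp (by fun_prop)
    · rw [Option.elim_some]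
      split_ifs
      · exact (hγ.continuous i).comp (by fun_prop)
      · exact hγ.continuous j
  · rintro (_ | j) s hs t ht h
    · have h1 := hγ.injOn i (hhigh s hs) (hhigh t ht) h
      exact mul_right_cancel₀ hc'.ne' (by linarith)
    · rw [Option.elim_some] at h
      split_ifs at h
      · exact mul_right_cancel₀ hc.1.ne' (hγ.injOn i (hlow s hs) (hlow t ht) h)
      · exact hγ.injOn j hs ht h
  · have hnone : ∀ j, ∀ s ∈ Icc (0 : ℝ) 1, ∀ t ∈ Icc (0 : ℝ) 1, γ i (c + s * (1 - c)) =
        (if j = i then fun t => γ i (t * c) else γ j) t → (s = 0 ∨ s = 1) ∧ (t = 0 ∨ t = 1) := by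
      intro j s hs t ht h
      split_ifs at h with hj
      · obtain ⟨h1, h2⟩ := hmix s hs t ht h
        exact ⟨Or.inl h1, Or.inr h2⟩
      · have := hγ.eq_of_ne i j (Ne.symm hj) _ (hhigh s hs) t ht h
        exact ⟨hhighE s hs this.1, this.2⟩
    rintro (_ | j) (_ | k) hjk s hs t ht h
    · exact absurd rfl hjk
    · exact hnone k s hs t ht h
    · exact (hnone j t ht s hs h.symm).symm
    · have hjk : j ≠ k := fun h => hjk (congrArg some h)
      simp only [Option.elim_some] at h
      split_ifs at h with hj hk hk
      · exact absurd (hj.trans hk.symm) hjk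
      · have := hγ.eq_of_ne i k (Ne.symm hk) _ (hlow s hs) t ht h
        exact ⟨hlowE s hs this.1, this.2⟩
      · have := hγ.eq_of_ne j i hj s hs _ (hlow t ht) h
        exact ⟨this.1, hlowE t ht this.2⟩
      · exact hγ.eq_of_ne j k hjk s hs t ht h
  · intro y
    obtain ⟨j, t, ht, rfl⟩ := hγ.exists_eq y
    by_cases hj : j = i
    · subst hj
      rcases le_total t c with htc | htc
      · refine ⟨some j, t / c, ⟨div_nonneg ht.1 hc.1.le, div_le_one_of_le₀ htc hc.1.le⟩, ?_⟩
        rw [Option.elim_some, if_pos rfl, div_mul_cancel₀ _ hc.1.ne']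
      · refine ⟨none, (t - c) / (1 - c), ⟨div_nonneg (by linarith) hc'.le,
          div_le_one_of_le₀ (by linarith [ht.2]) hc'.le⟩, ?_⟩
        rw [Option.elim_none, div_mul_cancel₀ _ hc'.ne', add_sub_cancel]
    · exact ⟨some j, t, ht, by rw [Option.elim_some, if_neg hj]⟩

end IsArcCover

theorem IsTree.exists_rootedArcs {Y : Type u} [MetricSpace Y] (hY : IsTree Y) (q : Y) :
    ∃ (W : Type) (_ : Finite W), Nonempty (RootedArcs Y q univ W) := by
  obtain ⟨⟨-, _, -, 𝒜, harc, hcover, hmeet⟩, hcurve⟩ := hY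
  have hγ := isArcCover_arcPath hcover hmeet fun A => (harc A A.2).some.symm
  obtain ⟨i, c, hc, hiq⟩ := hγ.exists_eq q
  rcases hc.1.eq_or_lt with h0 | h0
  · exact hγ.exists_rootedArcs hcurve ⟨i, Or.inl (h0 ▸ hiq)⟩
  rcases hc.2.eq_or_lt with h1 | h1
  · exact hγ.exists_rootedArcs hcurve ⟨i, Or.inr (h1 ▸ hiq)⟩
  refine (hγ.subdivide i ⟨h0, h1⟩).exists_rootedArcs hcurve ⟨none, Or.inl ?_⟩
  simpa using hiq

/-- The legs of a simple `n`-od, parametrized from the vertex. -/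
structure IsNodLegs {X : Type*} [TopologicalSpace X] {n : ℕ} (γ : Fin n → ℝ → X) (v : X) :
    Prop where
  continuous : ∀ i, Continuous (γ i)
  injOn : ∀ i, InjOn (γ i) (Icc 0 1)
  apply_zero : ∀ i, γ i 0 = v
  eq_zero : ∀ i j, i ≠ j → ∀ s ∈ Icc (0 : ℝ) 1, ∀ t ∈ Icc (0 : ℝ) 1, γ i s = γ j t →
    s = 0 ∧ t = 0
  exists_eq : ∀ x, ∃ i, ∃ t ∈ Icc (0 : ℝ) 1, γ i t = x

theorem IsSimpleNod.exists_isNodLegs {X : Type*} [TopologicalSpace X] {n : ℕ} {v : X}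
    (h : IsSimpleNod n (univ : Set X) v) : ∃ γ : Fin n → ℝ → X, IsNodLegs γ v := by
  obtain ⟨-, A, -, hcover, hend, hmeet⟩ := h
  choose b h h0 h1 using hend
  have hmem0 : (0 : ℝ) ∈ Icc (0 : ℝ) 1 := ⟨le_rfl, zero_le_one⟩
  have hzero : ∀ i, arcPath (h i) 0 = v := fun i => (arcPath_of_mem _ hmem0).trans (h0 i)
  have hv : ∀ i, ∀ s ∈ Icc (0 : ℝ) 1, arcPath (h i) s = v → s = 0 := fun i s hs hsv =>
    injOn_arcPath (h i) hs hmem0 (hsv.trans (hzero i).symm)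
  refine ⟨fun i => arcPath (h i), fun i => continuous_arcPath _, fun i => injOn_arcPath _, hzero,
    fun i j hij s hs t ht hst => ?_, fun x => ?_⟩
  · have h2 : arcPath (h i) s = v :=
      (hmeet i j hij).subset ⟨arcPath_mem _ _, hst ▸ arcPath_mem _ _⟩
    exact ⟨hv i s hs h2, hv j t ht (hst.symm.trans h2)⟩
  · obtain ⟨i, hi⟩ := mem_iUnion.1 (hcover.superset (mem_univ x))
    exact ⟨i, exists_arcPath_eq (h i) hi⟩

namespace IsNodLegs

section LegFrom

variable {X : Type*} {n : ℕ} {γ : Fin n → ℝ → X}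

/-- The legs of a simple `n`-od, the leg `i` being truncated at `c` and reversed. -/
def legFrom (γ : Fin n → ℝ → X) (i : Fin n) (c : ℝ) (j : Fin n) : ℝ → X :=
  if j = i then fun t => γ i (c * (1 - t)) else γ j

theorem legFrom_self (i : Fin n) (c t : ℝ) : legFrom γ i c i t = γ i (c * (1 - t)) := by
  rw [legFrom, if_pos rfl]

theorem legFrom_of_ne {i j : Fin n} (hij : j ≠ i) (c : ℝ) : legFrom γ i c j = γ j := by
  rw [legFrom, if_neg hij]

end LegFrom

variable {X : Type*} [TopologicalSpace X] {n : ℕ} {γ : Fin n → ℝ → X} {v : X}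

theorem mem_zero : (0 : ℝ) ∈ Icc (0 : ℝ) 1 := ⟨le_rfl, zero_le_one⟩

/-- A simple `n`-od rooted at its vertex. -/
def rootedAtVertex (h : IsNodLegs γ v) : RootedArcs X v univ (Fin n) where
  par := fun _ => none
  dep := fun _ => 0
  path := γ
  dep_lt := by simp
  continuous_path := h.continuous
  path_zero := h.apply_zero
  path_inj := by
    intro i j s t hs ht hst
    have hs' := Ioc_subset_Icc_self hs
    have ht' := Ioc_subset_Icc_self ht
    by_cases hij : i = j
    · subst hij
      exact ⟨rfl, h.injOn i hs' ht' hst⟩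
    · exact absurd (h.eq_zero i j hij s hs' t ht' hst).1 hs.1.ne'
  path_ne := by
    intro i s hs hsv
    rw [← h.apply_zero i] at hsv
    exact hs.1.ne' (h.injOn i (Ioc_subset_Icc_self hs) mem_zero hsv)
  carrier_eq := by
    refine eq_univ_of_forall fun x => ?_
    obtain ⟨i, t, ht, rfl⟩ := h.exists_eq x
    rcases ht.1.eq_or_lt with rfl | h0
    · exact Or.inl (h.apply_zero i)
    · exact Or.inr (mem_iUnion.2 ⟨i, t, ⟨h0, ht.2⟩, rfl⟩)

theorem mul_mem {c t : ℝ} (hc : c ∈ Ioc (0 : ℝ) 1) (ht : t ∈ Icc (0 : ℝ) 1) :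
    c * (1 - t) ∈ Icc (0 : ℝ) 1 :=
  ⟨mul_nonneg hc.1.le (by linarith [ht.2]),
    mul_le_one₀ hc.2 (by linarith [ht.2]) (by linarith [ht.1])⟩

/-- The part of a simple `n`-od which remains when the leg `i` is truncated at `c`, rooted at the
end of the truncated leg. -/
def rootedAtLeg (h : IsNodLegs γ v) (i : Fin n) {c : ℝ} (hc : c ∈ Ioc (0 : ℝ) 1) :
    RootedArcs X (γ i c) (insert (γ i c) (⋃ j, legFrom γ i c j '' Ioc 0 1)) (Fin n) where
  par := fun j => if j = i then none else some i
  dep := fun j => if j = i then 0 else 1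
  path := legFrom γ i c
  dep_lt := by
    intro j k hjk
    split_ifs at hjk with hj
    obtain rfl := Option.some_inj.1 hjk
    simp [hj]
  continuous_path := by
    intro j
    unfold legFrom
    split_ifs
    · exact (h.continuous i).comp (by fun_prop)
    · exact h.continuous j
  path_zero := by
    intro j
    by_cases hj : j = i
    · subst hj
      simp [legFrom_self]
    · simp [legFrom_of_ne hj, hj, legFrom_self, h.apply_zero]
  path_inj := by
    have hmix : ∀ j ≠ i, ∀ s ∈ Ioc (0 : ℝ) 1, ∀ t ∈ Ioc (0 : ℝ) 1,
        legFrom γ i c i s ≠ γ j t := by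
      intro j hj s hs t ht hst
      rw [legFrom_self] at hst
      exact ht.1.ne' (h.eq_zero i j hj.symm _ (mul_mem hc (Ioc_subset_Icc_self hs)) t
        (Ioc_subset_Icc_self ht) hst).2
    intro j k s t hs ht hst
    by_cases hj : j = i <;> by_cases hk : k = i
    · subst hj hk
      rw [legFrom_self, legFrom_self] at hst
      have := mul_left_cancel₀ hc.1.ne' (h.injOn _ (mul_mem hc (Ioc_subset_Icc_self hs))
        (mul_mem hc (Ioc_subset_Icc_self ht)) hst)
      exact ⟨rfl, by linarith⟩
    · rw [hj, legFrom_of_ne hk] at hst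
      exact absurd hst (hmix k hk s hs t ht)
    · rw [hk, legFrom_of_ne hj] at hst
      exact absurd hst.symm (hmix j hj t ht s hs)
    · rw [legFrom_of_ne hj, legFrom_of_ne hk] at hst
      exact h.rootedAtVertex.path_inj j k s t hs ht hst
  path_ne := by
    intro j s hs hsq
    by_cases hj : j = i
    · subst hj
      rw [legFrom_self] at hsq
      have := h.injOn j (mul_mem hc (Ioc_subset_Icc_self hs)) (Ioc_subset_Icc_self hc) hsq
      nlinarith [hs.1, hc.1]
    · rw [legFrom_of_ne hj] at hsq
      exact hs.1.ne' (h.eq_zero j i hj s (Ioc_subset_Icc_self hs) c (Ioc_subset_Icc_self hc) hsq).1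
  carrier_eq := rfl

theorem mem_truncation (h : IsNodLegs γ v) (i : Fin n) {c : ℝ} (hc : c ∈ Ioc (0 : ℝ) 1)
    {j : Fin n} {t : ℝ} (ht : t ∈ Icc (0 : ℝ) 1) (hjt : j = i → t ≤ c) :
    γ j t ∈ insert (γ i c) (⋃ j, legFrom γ i c j '' Ioc 0 1) := by
  have hi : ∀ t ∈ Icc 0 c, γ i t ∈ insert (γ i c) (⋃ j, legFrom γ i c j '' Ioc 0 1) := by
    intro t ht
    rcases ht.2.eq_or_lt with rfl | htc
    · exact mem_insert _ _
    · refine mem_insert_of_mem _ (mem_iUnion.2 ⟨i, 1 - t / c, ⟨?_, ?_⟩, ?_⟩)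
      · rw [sub_pos, div_lt_one hc.1]
        exact htc
      · linarith [div_nonneg ht.1 hc.1.le]
      · rw [legFrom_self, sub_sub_cancel, mul_div_cancel₀ _ hc.1.ne']
  by_cases hj : j = i
  · subst hj
    exact hi t ⟨ht.1, hjt rfl⟩
  · rcases ht.1.eq_or_lt with rfl | h0
    · rw [h.apply_zero, ← h.apply_zero i]
      exact hi 0 ⟨le_rfl, hc.1.le⟩
    · exact mem_insert_of_mem _ (mem_iUnion.2 ⟨j, t, ⟨h0, ht.2⟩, by rw [legFrom_of_ne hj]⟩)

theorem ncard_children (hn : 3 ≤ n) (i : Fin n) :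
    2 ≤ {j | (if j = i then none else some i) = some i}.ncard := by
  have : {j | (if j = i then none else some i) = some i} = {i}ᶜ := by
    ext j
    by_cases hj : j = i <;> simp [hj]
  rw [this, ncard_compl, ncard_singleton, Nat.card_fin]
  omega

theorem isNodForest_rootedAtLeg (hn : 3 ≤ n) (h : IsNodLegs γ v) (i : Fin n) {c : ℝ}
    (hc : c ∈ Ioc (0 : ℝ) 1) : IsNodForest (h.rootedAtLeg i hc).par := by
  refine Or.inr ⟨i, if_pos rfl, fun j => ?_, ncard_children hn i⟩
  by_cases hj : j = i
  · exact Or.inl (if_pos hj)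
  · exact Or.inr (if_neg hj)

theorem exists_rootedArcs (hn : 3 ≤ n) (h : IsNodLegs γ v) (p : X) :
    ∃ (W : Type) (_ : Finite W) (D : RootedArcs X p univ W), IsNodForest D.par := by
  obtain ⟨i, c, hc, rfl⟩ := h.exists_eq p
  rcases hc.1.eq_or_lt with rfl | h0
  · rw [h.apply_zero]
    exact ⟨Fin n, inferInstance, h.rootedAtVertex, Or.inl fun _ => rfl⟩
  have hc' : c ∈ Ioc (0 : ℝ) 1 := ⟨h0, hc.2⟩
  obtain ⟨Z, hZ⟩ : ∃ Z, Z = insert (γ i c) (⋃ j, legFrom γ i c j '' Ioc 0 1) := ⟨_, rfl⟩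
  have hmem : ∀ j, ∀ t ∈ Icc (0 : ℝ) 1, (j = i → t ≤ c) → γ j t ∈ Z := fun j t ht hjt => by
    rw [hZ]
    exact h.mem_truncation i hc' ht hjt
  obtain ⟨D, hD⟩ : ∃ D : RootedArcs X (γ i c) Z (Fin n),
      D.par = fun j => if j = i then none else some i := by
    subst hZ
    exact ⟨h.rootedAtLeg i hc', rfl⟩
  rcases hc.2.eq_or_lt with rfl | h1
  · have huniv : Z = univ := by
      refine eq_univ_of_forall fun x => ?_
      obtain ⟨j, t, ht, rfl⟩ := h.exists_eq x
      exact hmem j t ht fun _ => ht.2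
    subst huniv
    exact ⟨Fin n, inferInstance, D, hD ▸ h.isNodForest_rootedAtLeg hn i hc'⟩
  have hc1 : 0 < 1 - c := by linarith
  have hhigh : ∀ t ∈ Ioc (0 : ℝ) 1, c < c + t * (1 - c) ∧ c + t * (1 - c) ∈ Icc (0 : ℝ) 1 := by
    intro t ht
    have h2 := mul_pos ht.1 hc1
    exact ⟨by linarith, by linarith, by nlinarith [ht.2]⟩
  have hinj : InjOn (fun t => γ i (c + t * (1 - c))) (Ioc 0 1) := by
    intro s hs t ht hst
    have := h.injOn i (hhigh s hs).2 (hhigh t ht).2 hst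
    exact mul_right_cancel₀ hc1.ne' (by linarith)
  have hdisj : ∀ t ∈ Ioc (0 : ℝ) 1, γ i (c + t * (1 - c)) ∉ Z := by
    intro t ht htZ
    obtain ⟨h2, h3⟩ := hhigh t ht
    rw [hZ] at htZ
    rcases htZ with htq | htZ
    · exact h2.ne' (h.injOn i h3 hc htq)
    · obtain ⟨j, s, hs, hst⟩ := mem_iUnion.1 htZ
      by_cases hj : j = i
      · subst hj
        rw [legFrom_self] at hst
        have h4 := h.injOn j (mul_mem hc' (Ioc_subset_Icc_self hs)) h3 hst
        nlinarith [hs.1, mul_pos h0 hs.1]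
      · rw [legFrom_of_ne hj] at hst
        have h4 := (h.eq_zero j i hj s (Ioc_subset_Icc_self hs) _ h3 hst).1
        exact hs.1.ne' h4
  obtain ⟨D', hpar⟩ : ∃ D' : RootedArcs X (γ i c)
      (Z ∪ (fun t => γ i (c + t * (1 - c))) '' Ioc 0 1) (Option (Fin n)),
      D'.par = fun x => x.elim none fun j => (D.par j).map some :=
    ⟨D.attach none ((h.continuous i).comp (by fun_prop)) (by simp [RootedArcs.vertex])
      hinj hdisj, rfl⟩
  have huniv : Z ∪ (fun t => γ i (c + t * (1 - c))) '' Ioc 0 1 = univ := by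
    refine eq_univ_of_forall fun x => ?_
    obtain ⟨j, t, ht, rfl⟩ := h.exists_eq x
    by_cases hj : j = i → t ≤ c
    · exact Or.inl (hmem j t ht hj)
    · push Not at hj
      obtain ⟨rfl, htc⟩ := hj
      refine Or.inr ⟨(t - c) / (1 - c), ⟨div_pos (by linarith) hc1,
        div_le_one_of_le₀ (by linarith [ht.2]) hc1.le⟩, ?_⟩
      simp only [div_mul_cancel₀ _ hc1.ne', add_sub_cancel]
  have hforest : IsNodForest D'.par := by
    refine Or.inr ⟨some i, ?_, ?_, ?_⟩
    · simp [hpar, hD]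
    · rintro (_ | j)
      · exact Or.inl (by simp [hpar])
      · by_cases hj : j = i <;> simp [hpar, hD, hj]
    · have himg : {w | D'.par w = some (some i)} =
          some '' {j | (if j = i then none else some i) = some i} := by
        ext w
        rcases w with _ | j
        · simp [hpar]
        · by_cases hj : j = i <;> simp [hpar, hD, hj]
      rw [himg, ncard_image_of_injective _ (Option.some_injective _)]
      exact ncard_children hn i
  generalize Z ∪ (fun t => γ i (c + t * (1 - c))) '' Ioc 0 1 = Z' at D' huniv hpar hforest
  subst huniv
  exact ⟨Option (Fin n), inferInstance, D', hforest⟩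

end IsNodLegs

theorem statement9 {X : Type u} [MetricSpace X] (hX : IsTree X)
    (n : ℕ) (hn : 3 ≤ n) (v : X) (hXnod : IsSimpleNod n (univ : Set X) v)
    (p : X) : UniqueHyperspaceInTrees X p := by
  intro Y _ hY q ⟨e⟩
  obtain ⟨γ, hγ⟩ := hXnod.exists_isNodLegs
  obtain ⟨W, _, D, hD⟩ := hγ.exists_rootedArcs hn p
  obtain ⟨W₀, _, ⟨D₀⟩⟩ := hY.exists_rootedArcs q
  obtain ⟨W', _, D', hred⟩ := D₀.exists_reduced
  have hcards : boundaryCards D.par = boundaryCards D'.par := by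
    rw [← D.cellDims_CP, ← D'.cellDims_CP, cellDims_eq_of_homeomorph e]
  obtain ⟨σ, hσ⟩ := exists_equiv_of_boundaryCards_eq D.dep_lt D'.dep_lt hred hD hcards
  exact D.exists_homeomorph D' σ hσ
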